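/- There exists x_0 such that for all real x ≥ x_0, the quantity R(x) = ∑_{p ≤ x, p prime} 1/p − log(log x) − B_1 satisfies |R(x)| ≤ 1/(10 (log x)^2) + 4/(15 (log x)^3). -/

import Mathlib

/-!
The remainder is in fact `O(1 / log³ x)`, so the term `1 / (10 log² x)` alone dominates it for large
`x`. This follows by partial summation from the prime number theorem in the form
`θ(x) = x + O(x / log³ x)` (`exists_theta_bound`, `exists_mertensSum_sub_bound`). The constant `B₁`
enters only at the end: the estimate for the difference of the Mertens sums at `x` and `y` is uniform
in `y`, and `y` goes to infinity.

The prime number theorem with this error term needs no zero-free region of definite width. Write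
`Z(s) = (s - 1) ζ(s)`, an entire function. A series valid for `re s > 199/200` shows that
`Z(s) = O((1 + |im s|)^(101/100))` there, hence the same for `Z'` by Cauchy's estimate
(`norm_zetaZ_le`, `norm_deriv_zetaZ_le`). The `3-4-1` inequality, together with the resulting Lipschitz
bound, gives `|Z(s)| ≫ (1 + |im s|)^(96/100)` for `1 < re s ≤ 2` (`zetaZ_lower`). Cauchy's estimate on
discs of radius comparable to `(1 + |im s|)^(-1/20)` then bounds six derivatives of
`F(s) = -Z'(s) / (Z(s) s (s + 1))` by `(1 + |im s|)^(-3/2)`, uniformly up to the line `re s = 1`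
(`norm_iteratedDeriv_kernF_le`).

On the other hand the inverse Fourier transform of `F` along the line `re s = σ > 1`, taken at `log x`,
is `x^(-σ-1) (ψ₁(x) - (x - 1)² / 2)` with `ψ₁(x) = ∑_{n ≤ x} Λ(n) (x - n)` (`fourierInv_kernF_eq`).
Six integrations by parts and `σ = 1 + 1 / log x` give `ψ₁(x) = (x - 1)² / 2 + O(x² / log⁶ x)`
(`exists_psiOne_bound`), and the monotonicity of `ψ` turns this into `ψ(x) = x + O(x / log³ x)`
(`exists_psi_bound`). Prime powers contribute only `O(√x)`.
-/

section Analytic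

open Complex MeasureTheory FourierTransform

/-! ### Growth of `(s - 1) ζ(s)` near the line `re s = 1` -/

/-- The entire function `(s - 1) ζ(s)`, with its removable singularity at `s = 1` filled in by the
value `1`, the residue of `ζ`. -/
noncomputable def zetaZ : ℂ → ℂ := Function.update (fun s ↦ (s - 1) * riemannZeta s) 1 1

lemma zetaZ_of_ne {s : ℂ} (hs : s ≠ 1) : zetaZ s = (s - 1) * riemannZeta s :=
  Function.update_of_ne hs ..

lemma zetaZ_one : zetaZ 1 = 1 := Function.update_self ..

lemma differentiable_zetaZ : Differentiable ℂ zetaZ := by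
  unfold zetaZ
  rw [← differentiableOn_univ,
    ← differentiableOn_compl_singleton_and_continuousAt_iff (c := 1) Filter.univ_mem]
  refine ⟨DifferentiableOn.congr (f := fun s ↦ (s - 1) * riemannZeta s)
    (fun s hs ↦ DifferentiableAt.differentiableWithinAt ?_)
    fun _ hs ↦ Function.update_of_ne (Set.mem_sdiff_singleton.mp hs).2 ..,
    continuousWithinAt_compl_self.mp ?_⟩
  · have := differentiableAt_riemannZeta (s := s) (by simp_all)
    fun_prop
  · simpa using riemannZeta_residue_one

/-- The `n`-th term of the series `(s - 1) ζ(s) = 1 + ∑ₙ zetaTerm n s`. Up to the factor `s - 1` it is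
`∫ ((n + 1)^(-s) - x^(-s)) dx` over `[n + 1, n + 2]`. -/
noncomputable def zetaTerm (n : ℕ) (s : ℂ) : ℂ :=
  (s - 1) * (((n + 1 : ℝ) : ℝ) : ℂ) ^ (-s) - (((n + 1 : ℝ) : ℝ) : ℂ) ^ (1 - s)
    + (((n + 2 : ℝ) : ℝ) : ℂ) ^ (1 - s)

lemma hasDerivAt_real_cpow {x : ℝ} (hx : 0 < x) (c : ℂ) :
    HasDerivAt (fun y : ℝ ↦ (y : ℂ) ^ c) (c * (x : ℂ) ^ (c - 1)) x := by
  have := ((hasDerivAt_id (x : ℂ)).cpow_const (c := c) (by simp [hx])).comp_ofReal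
  simpa using this

/-- The trivial bound `2 a^(-σ)` and the mean value bound `‖s‖ a^(-σ - 1)`, interpolated with weights
`99/100` and `1/100`. The small power of `‖s‖` is what makes the growth exponent of `(s - 1) ζ(s)`
near the line `re s = 1` as small as `101/100`. -/
lemma norm_cpow_sub_le {a x : ℝ} (ha : 1 ≤ a) (hax : a ≤ x) (hx1 : x ≤ a + 1) {s : ℂ}
    (hs : 0 < s.re) :
    ‖(a : ℂ) ^ (-s) - (x : ℂ) ^ (-s)‖ ≤ 2 * ‖s‖ ^ (1 / 100 : ℝ) * a ^ (-s.re - 1 / 100) := by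
  have ha0 : 0 < a := by linarith
  have hsn : 0 < ‖s‖ := lt_of_lt_of_le hs ((le_abs_self _).trans (abs_re_le_norm s))
  have hA : ‖(a : ℂ) ^ (-s) - (x : ℂ) ^ (-s)‖ ≤ 2 * a ^ (-s.re) := by
    refine (norm_sub_le _ _).trans ?_
    rw [norm_cpow_eq_rpow_re_of_pos ha0, norm_cpow_eq_rpow_re_of_pos (by linarith)]
    have : x ^ (-s).re ≤ a ^ (-s).re :=
      Real.rpow_le_rpow_of_nonpos ha0 hax (by simp [hs.le])
    simp at this ⊢
    linarith
  have hB : ‖(a : ℂ) ^ (-s) - (x : ℂ) ^ (-s)‖ ≤ ‖s‖ * a ^ (-s.re - 1) := by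
    rw [norm_sub_rev]
    have := norm_image_sub_le_of_norm_deriv_le_segment' (a := a) (b := x)
      (f := fun y : ℝ ↦ (y : ℂ) ^ (-s)) (C := ‖s‖ * a ^ (-s.re - 1))
      (fun y hy ↦ (hasDerivAt_real_cpow (by linarith [hy.1]) (-s)).hasDerivWithinAt)
      (fun y hy ↦ by
        rw [norm_mul, norm_neg, norm_cpow_eq_rpow_re_of_pos (by linarith [hy.1])]
        gcongr
        simpa using Real.rpow_le_rpow_of_nonpos ha0 hy.1 (z := (-s - 1).re) (by simp; linarith))
      x ⟨hax, le_rfl⟩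
    refine this.trans (mul_le_of_le_one_right (by positivity) (by linarith))
  set D := ‖(a : ℂ) ^ (-s) - (x : ℂ) ^ (-s)‖ with hD
  have hD0 : 0 ≤ D := norm_nonneg _
  calc D = D ^ (99 / 100 : ℝ) * D ^ (1 / 100 : ℝ) := by
        rw [← Real.rpow_add' hD0 (by norm_num)]; norm_num
    _ ≤ (2 * a ^ (-s.re)) ^ (99 / 100 : ℝ) * (‖s‖ * a ^ (-s.re - 1)) ^ (1 / 100 : ℝ) := by
        gcongr
    _ = 2 ^ (99 / 100 : ℝ) * ‖s‖ ^ (1 / 100 : ℝ) * a ^ (-s.re - 1 / 100) := by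
        rw [Real.mul_rpow (by positivity) (by positivity),
          Real.mul_rpow (by positivity) (by positivity), ← Real.rpow_mul ha0.le,
          ← Real.rpow_mul ha0.le]
        have : a ^ (-s.re - 1 / 100) = a ^ (-s.re * (99/100)) * a ^ ((-s.re - 1) * (1/100)) := by
          rw [← Real.rpow_add ha0]; congr 1; ring
        rw [this]; ring
    _ ≤ _ := by
        gcongr
        calc (2:ℝ) ^ (99/100 : ℝ) ≤ 2 ^ (1:ℝ) :=
              Real.rpow_le_rpow_of_exponent_le (by norm_num) (by norm_num)
          _ = 2 := Real.rpow_one 2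

lemma norm_zetaTerm_le (n : ℕ) {s : ℂ} (hs : 199 / 200 < s.re) :
    ‖zetaTerm n s‖ ≤ ‖s - 1‖ * (2 * ‖s‖ ^ (1 / 100 : ℝ)) * (n + 1 : ℝ) ^ (-(201 / 200) : ℝ) := by
  have hn : (1:ℝ) ≤ n + 1 := by simp
  have hn0 : (0:ℝ) < n + 1 := by linarith
  have key := norm_image_sub_le_of_norm_deriv_le_segment' (a := (n + 1 : ℝ)) (b := (n + 2 : ℝ))
      (f := fun y : ℝ ↦ (s - 1) * (((n + 1 : ℝ) : ℝ) : ℂ) ^ (-s) * (y : ℂ) + (y : ℂ) ^ (1 - s))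
      (f' := fun y : ℝ ↦ (s - 1) * ((((n + 1 : ℝ) : ℝ) : ℂ) ^ (-s) - (y : ℂ) ^ (-s)))
      (C := ‖s - 1‖ * (2 * ‖s‖ ^ (1 / 100 : ℝ)) * (n + 1 : ℝ) ^ (-(201 / 200) : ℝ))
      (fun y hy ↦ by
        refine HasDerivAt.hasDerivWithinAt ?_
        have h1 := hasDerivAt_real_cpow (x := y) (by linarith [hy.1]) (1 - s)
        have h2 := ((hasDerivAt_id (y : ℂ)).comp_ofReal).const_mul
          ((s - 1) * (((n + 1 : ℝ) : ℝ) : ℂ) ^ (-s))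
        convert! h2.add h1 using 1
        rw [show (1 - s - 1) = -s by ring]
        ring)
      (fun y hy ↦ by
        rw [norm_mul, mul_assoc]
        gcongr
        refine (norm_cpow_sub_le hn hy.1 (by linarith [hy.2]) (by linarith)).trans ?_
        gcongr
        · linarith)
      (n + 2) ⟨by linarith, le_rfl⟩
  have h1 : (n + 2 : ℝ) - (n + 1) = 1 := by ring
  rw [h1, mul_one] at key
  refine le_of_eq_of_le (congrArg norm ?_) key
  simp only [zetaTerm]
  push_cast
  ring

lemma summable_bound : Summable fun n : ℕ ↦ (n + 1 : ℝ) ^ (-(201 / 200) : ℝ) := by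
  have := (summable_nat_add_iff 1).mpr
    (Real.summable_nat_rpow (p := -(201/200)).mpr (by norm_num))
  exact this.congr fun n ↦ by push_cast; rfl

lemma differentiable_zetaTerm (n : ℕ) : Differentiable ℂ (zetaTerm n) := by
  intro s
  have h1 : (((n + 1 : ℝ) : ℝ) : ℂ) ≠ 0 := by
    exact_mod_cast (by positivity : (n + 1 : ℝ) ≠ 0)
  have h2 : (((n + 2 : ℝ) : ℝ) : ℂ) ≠ 0 := by
    exact_mod_cast (by positivity : (n + 2 : ℝ) ≠ 0)
  unfold zetaTerm
  refine ((((differentiableAt_id.sub_const 1).mul (DifferentiableAt.const_cpow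
    differentiableAt_id.neg (.inl h1))).sub (DifferentiableAt.const_cpow
    (differentiableAt_id.const_sub 1) (.inl h1))).add (DifferentiableAt.const_cpow
    (differentiableAt_id.const_sub 1) (.inl h2)))

/-- For `re s > 1` this is a telescoping sum; `zetaZ_eq_tsum` extends it by analytic continuation. -/
lemma zetaZ_eq_tsum_of_one_lt {s : ℂ} (hs : 1 < s.re) : zetaZ s = 1 + ∑' n, zetaTerm n s := by
  have hs1 : s ≠ 1 := by rintro rfl; simp at hs
  have h1 : HasSum (fun n : ℕ ↦ (s - 1) * (((n + 1 : ℝ) : ℝ) : ℂ) ^ (-s))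
      ((s - 1) * riemannZeta s) := by
    refine HasSum.mul_left _ ?_
    rw [zeta_eq_tsum_one_div_nat_add_one_cpow hs]
    have hsum : Summable fun n : ℕ ↦ 1 / ((n : ℂ) + 1) ^ s := by
      have := (summable_nat_add_iff 1).mpr (Complex.summable_one_div_nat_cpow.mpr hs)
      simpa using this
    refine hsum.hasSum.congr_fun fun n ↦ ?_
    rw [cpow_neg]; simp
  have h2 : HasSum (fun n : ℕ ↦ (((n + 1 : ℝ) : ℝ) : ℂ) ^ (1 - s)
    - (((n + 2 : ℝ) : ℝ) : ℂ) ^ (1 - s)) 1 := by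
    have h3 : Filter.Tendsto (fun n : ℕ ↦ (((n + 1 : ℝ) : ℝ) : ℂ) ^ (1 - s)) Filter.atTop
        (nhds 0) := by
      rw [tendsto_zero_iff_norm_tendsto_zero]
      have : Filter.Tendsto (fun n : ℕ ↦ (n + 1 : ℝ) ^ (-(s.re - 1))) Filter.atTop (nhds 0) :=
        (tendsto_rpow_neg_atTop (by linarith)).comp
          (Filter.tendsto_atTop_add_const_right _ 1 tendsto_natCast_atTop_atTop)
      refine this.congr fun n ↦ ?_
      rw [norm_cpow_eq_rpow_re_of_pos (by positivity)]
      simp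
    have hb : Summable fun n : ℕ ↦ (((n + 1 : ℝ) : ℝ) : ℂ) ^ (1 - s)
        - (((n + 2 : ℝ) : ℝ) : ℂ) ^ (1 - s) := by
      have h4 : Summable fun n : ℕ ↦ zetaTerm n s :=
        Summable.of_norm_bounded (summable_bound.mul_left _)
          fun n ↦ norm_zetaTerm_le n (by linarith)
      refine (h1.summable.sub h4).congr fun n ↦ ?_
      simp only [zetaTerm]; ring
    rw [hb.hasSum_iff_tendsto_nat]
    have h5 : ∀ N : ℕ, ∑ n ∈ Finset.range N, ((((n + 1 : ℝ) : ℝ) : ℂ) ^ (1 - s)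
        - (((n + 2 : ℝ) : ℝ) : ℂ) ^ (1 - s)) = 1 - (((N + 1 : ℝ) : ℝ) : ℂ) ^ (1 - s) := by
      intro N
      have := Finset.sum_range_sub' (fun n : ℕ ↦ (((n + 1 : ℝ) : ℝ) : ℂ) ^ (1 - s)) N
      convert this using 2 with n
      · push_cast; ring_nf
      · simp
    simp_rw [h5]
    simpa using h3.const_sub 1
  have h3 := h1.sub h2
  rw [zetaZ_of_ne hs1, show (fun n ↦ zetaTerm n s) = _ from rfl]
  have : ∀ n, zetaTerm n s = (s - 1) * (((n + 1 : ℝ) : ℝ) : ℂ) ^ (-s) -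
      ((((n + 1 : ℝ) : ℝ) : ℂ) ^ (1 - s) - (((n + 2 : ℝ) : ℝ) : ℂ) ^ (1 - s)) := by
    intro n; simp only [zetaTerm]; ring
  simp_rw [this]
  rw [h3.tsum_eq]; ring

lemma zetaZ_eq_tsum {s : ℂ} (hs : 199 / 200 < s.re) : zetaZ s = 1 + ∑' n, zetaTerm n s := by
  set U : Set ℂ := {s | 199 / 200 < s.re} with hU
  have hUo : IsOpen U := isOpen_lt continuous_const continuous_re
  have hUc : IsPreconnected U := (convex_halfSpace_re_gt (199 / 200)).isPreconnected
  have hd : DifferentiableOn ℂ (fun s ↦ ∑' n, zetaTerm n s) U := by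
    intro z hz
    set V : Set ℂ := U ∩ Metric.ball 0 (‖z‖ + 1) with hV
    have hVo : IsOpen V := hUo.inter Metric.isOpen_ball
    have hzV : z ∈ V := ⟨hz, by simp⟩
    have : DifferentiableOn ℂ (fun s ↦ ∑' n, zetaTerm n s) V := by
      refine differentiableOn_tsum_of_summable_norm
        (summable_bound.mul_left ((‖z‖ + 2) * (2 * (‖z‖ + 1) ^ (1 / 100 : ℝ))))
        (fun n ↦ (differentiable_zetaTerm n).differentiableOn) hVo ?_
      intro n w hw
      refine (norm_zetaTerm_le n hw.1).trans ?_
      have h1 : ‖w‖ ≤ ‖z‖ + 1 := (mem_ball_zero_iff.mp hw.2).le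
      have h2 : ‖w - 1‖ ≤ ‖z‖ + 2 := by
        refine (norm_sub_le _ _).trans ?_
        simp; linarith
      gcongr
    exact (this.differentiableAt (hVo.mem_nhds hzV)).differentiableWithinAt
  have := AnalyticOnNhd.eqOn_of_preconnected_of_eventuallyEq
    (differentiable_zetaZ.differentiableOn.analyticOnNhd hUo)
    ((hd.const_add 1).analyticOnNhd hUo) hUc (z₀ := 2) (by simp [hU]; norm_num)
    (by
      filter_upwards [(isOpen_lt continuous_const continuous_re).mem_nhds
        (show (2 : ℂ) ∈ {s : ℂ | 1 < s.re} by simp)] with w hw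
      exact zetaZ_eq_tsum_of_one_lt hw)
  exact this hs

lemma norm_zetaZ_le : ∃ C : ℝ, 0 < C ∧ ∀ s : ℂ, 199 / 200 < s.re → s.re ≤ 3 →
    ‖zetaZ s‖ ≤ C * (1 + |s.im|) ^ (101 / 100 : ℝ) := by
  set S := ∑' n : ℕ, (n + 1 : ℝ) ^ (-(201 / 200) : ℝ) with hS
  have hS0 : 0 ≤ S := tsum_nonneg fun n ↦ by positivity
  refine ⟨1 + 3 * (2 * 3) * S, by positivity, fun s h1 h2 ↦ ?_⟩
  set T := 1 + |s.im| with hT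
  have hT1 : 1 ≤ T := by simp [hT]
  have hb : ‖s‖ ≤ 3 * T := by
    refine (norm_le_abs_re_add_abs_im s).trans ?_
    rw [abs_of_pos (by linarith)]; linarith [abs_nonneg s.im]
  have hb1 : ‖s - 1‖ ≤ 3 * T := by
    refine (norm_le_abs_re_add_abs_im _).trans ?_
    have : |(s - 1).re| ≤ 2 := by simp [abs_le]; constructor <;> linarith
    simp only [sub_im, one_im, sub_zero]; linarith [abs_nonneg s.im]
  have hT2 : 1 ≤ T ^ (101 / 100 : ℝ) := Real.one_le_rpow hT1 (by norm_num)
  have h3 : ‖∑' n, zetaTerm n s‖ ≤ 3 * (2 * 3) * S * T ^ (101 / 100 : ℝ) := by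
    have h4 := tsum_of_norm_bounded
      (summable_bound.hasSum.mul_left (‖s - 1‖ * (2 * ‖s‖ ^ (1 / 100 : ℝ))))
      fun n ↦ norm_zetaTerm_le n h1
    refine h4.trans ?_
    rw [← hS]
    calc _ ≤ 3 * T * (2 * (3 * T) ^ (1 / 100 : ℝ)) * S := by gcongr
      _ ≤ 3 * T * (2 * (3 * T ^ (1 / 100 : ℝ))) * S := by
        rw [Real.mul_rpow (by norm_num) (by positivity)]
        have : (3:ℝ) ^ (1 / 100 : ℝ) ≤ 3 ^ (1 : ℝ) :=
          Real.rpow_le_rpow_of_exponent_le (by norm_num) (by norm_num)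
        rw [Real.rpow_one] at this
        gcongr
      _ = _ := by
        have : T ^ (101 / 100 : ℝ) = T * T ^ (1 / 100 : ℝ) := by
          rw [← Real.rpow_one_add' (by positivity) (by norm_num)]; norm_num
        rw [this]; ring
  rw [zetaZ_eq_tsum h1]
  refine (norm_add_le _ _).trans ?_
  rw [norm_one]
  linarith

/-! ### Lower bounds for `(s - 1) ζ(s)` and derivatives of its logarithmic derivative -/

lemma norm_deriv_zetaZ_le : ∃ C : ℝ, 0 < C ∧ ∀ s : ℂ, 399 / 400 ≤ s.re → s.re ≤ 5 / 2 →
    ‖deriv zetaZ s‖ ≤ C * (1 + |s.im|) ^ (101 / 100 : ℝ) := by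
  obtain ⟨C, hC, h⟩ := norm_zetaZ_le
  refine ⟨C * 2 ^ (101 / 100 : ℝ) / (1 / 500), by positivity, fun s h1 h2 ↦ ?_⟩
  refine (norm_deriv_le_of_forall_mem_sphere_norm_le (c := s) (R := 1 / 500)
    (C := C * 2 ^ (101 / 100 : ℝ) * (1 + |s.im|) ^ (101 / 100 : ℝ)) (by norm_num)
    differentiable_zetaZ.diffContOnCl fun z hz ↦ ?_).trans (le_of_eq (by ring))
  rw [mem_sphere_iff_norm] at hz
  have hre := abs_le.mp ((abs_re_le_norm (z - s)).trans hz.le)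
  have him := (abs_im_le_norm (z - s)).trans hz.le
  rw [sub_re] at hre
  rw [sub_im] at him
  have him2 : |z.im| ≤ |s.im| + 1 / 500 := by
    have := abs_sub_abs_le_abs_sub z.im s.im
    linarith
  refine (h z (by linarith [hre.1]) (by linarith [hre.2])).trans ?_
  rw [mul_assoc, ← Real.mul_rpow (by norm_num) (by positivity)]
  gcongr
  linarith [abs_nonneg s.im]

lemma norm_zetaZ_sub_le : ∃ C : ℝ, 0 < C ∧ ∀ Y : ℝ, ∀ z w : ℂ,
    399 / 400 ≤ z.re → z.re ≤ 5 / 2 → |z.im| ≤ Y →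
    399 / 400 ≤ w.re → w.re ≤ 5 / 2 → |w.im| ≤ Y →
    ‖zetaZ w - zetaZ z‖ ≤ C * (1 + Y) ^ (101 / 100 : ℝ) * ‖w - z‖ := by
  obtain ⟨C, hC, h⟩ := norm_deriv_zetaZ_le
  refine ⟨C, hC, fun Y z w z1 z2 z3 w1 w2 w3 ↦ ?_⟩
  have hconv : Convex ℝ (Set.Icc (399 / 400 : ℝ) (5 / 2) ×ℂ Set.Icc (-Y) Y) :=
    ((convex_Icc _ _).linear_preimage reLm).inter ((convex_Icc _ _).linear_preimage imLm)
  refine hconv.norm_image_sub_le_of_norm_deriv_le (𝕜 := ℂ)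
    (fun x _ ↦ differentiable_zetaZ x) (fun x hx ↦ ?_) ⟨⟨z1, z2⟩, abs_le.mp z3⟩
    ⟨⟨w1, w2⟩, abs_le.mp w3⟩
  refine (h x hx.1.1 hx.1.2).trans ?_
  have : |x.im| ≤ Y := abs_le.mpr hx.2
  gcongr

lemma zetaZ_ne_zero {s : ℂ} (hs : 1 ≤ s.re) : zetaZ s ≠ 0 := by
  by_cases h : s = 1
  · rw [h, zetaZ_one]; exact one_ne_zero
  · rw [zetaZ_of_ne h]
    exact mul_ne_zero (sub_ne_zero.mpr h) (riemannZeta_ne_zero_of_one_le_re hs)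

/-- The `3-4-1` inequality. -/
lemma one_le_zeta_product {x : ℝ} (hx : 0 < x) (y : ℝ) :
    1 ≤ ‖riemannZeta (1 + x)‖ ^ 3 * ‖riemannZeta (1 + x + I * y)‖ ^ 4 *
      ‖riemannZeta (1 + x + 2 * I * y)‖ := by
  have := DirichletCharacter.norm_LFunction_product_ge_one (N := 1) 1 hx y
  simpa [DirichletCharacter.LFunctionTrivChar, DirichletCharacter.LFunction_modOne_eq] using this

/-- The `3-4-1` inequality, with the bound of `norm_zetaZ_le` for the factors at `1 + x` and
`1 + x + 2iy`. -/
lemma zetaZ_lower_off_line : ∃ k : ℝ, 0 < k ∧ ∀ x y : ℝ, 0 < x → x ≤ 1 → 1 ≤ |y| →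
    k ^ 4 * x ^ 3 * (1 + |y|) ^ (399 / 100 : ℝ) ≤ ‖zetaZ (1 + x + I * y)‖ ^ 4 := by
  obtain ⟨C, hC, h⟩ := norm_zetaZ_le
  refine ⟨(1 / (128 * C ^ 4)) ^ (1 / 4 : ℝ), by positivity, fun x y hx hx1 hy ↦ ?_⟩
  have hk : ((1 / (128 * C ^ 4)) ^ (1 / 4 : ℝ)) ^ 4 = 1 / (128 * C ^ 4) := by
    rw [← Real.rpow_natCast, ← Real.rpow_mul (by positivity)]; norm_num
  rw [hk]
  set T := 1 + |y| with hT
  have hT0 : 0 < T := by positivity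
  have e1 : zetaZ (1 + x) = x * riemannZeta (1 + x) := by
    rw [zetaZ_of_ne (by simpa using hx.ne')]; ring
  have e2 : zetaZ (1 + x + I * y) = (x + I * y) * riemannZeta (1 + x + I * y) := by
    rw [zetaZ_of_ne]
    · ring
    · intro h; have := congrArg re h; simp at this; linarith
  have e3 : zetaZ (1 + x + 2 * I * y) = (x + 2 * I * y) * riemannZeta (1 + x + 2 * I * y) := by
    rw [zetaZ_of_ne]
    · ring
    · intro h; have := congrArg re h; simp at this; linarith
  have n2 : T / 2 ≤ ‖(x + I * y : ℂ)‖ := by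
    have := abs_im_le_norm (x + I * y : ℂ)
    simp at this; linarith
  have n3 : T / 2 ≤ ‖(x + 2 * I * y : ℂ)‖ := by
    have := abs_im_le_norm (x + 2 * I * y : ℂ)
    simp [abs_mul] at this; linarith
  have b1 : ‖zetaZ (1 + x)‖ ≤ C := by
    have := h (1 + x) (by simp; linarith) (by simp; linarith)
    simpa using this
  have b3 : ‖zetaZ (1 + x + 2 * I * y)‖ ≤ 4 * C * T ^ (101 / 100 : ℝ) := by
    refine (h (1 + x + 2 * I * y) (by simp; linarith) (by simp; linarith)).trans ?_
    have h1 : 1 + |(1 + x + 2 * I * y : ℂ).im| ≤ 2 * T := by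
      simp [abs_mul]; linarith
    calc _ ≤ C * (2 * T) ^ (101 / 100 : ℝ) := by gcongr
      _ = C * (2 ^ (101 / 100 : ℝ) * T ^ (101 / 100 : ℝ)) := by
        rw [Real.mul_rpow (by norm_num) hT0.le]
      _ ≤ C * (2 ^ (2 : ℝ) * T ^ (101 / 100 : ℝ)) := by
        gcongr <;> norm_num
      _ = _ := by norm_num; ring
  have prod : x ^ 3 * (T / 2) ^ 4 * (T / 2) ≤
      C ^ 3 * ‖zetaZ (1 + x + I * y)‖ ^ 4 * (4 * C * T ^ (101 / 100 : ℝ)) := by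
    have p := one_le_zeta_product hx y
    have l : x ^ 3 * (T / 2) ^ 4 * (T / 2) ≤
        x ^ 3 * ‖(x + I * y : ℂ)‖ ^ 4 * ‖(x + 2 * I * y : ℂ)‖ := by gcongr
    have r : ‖zetaZ (1 + x)‖ ^ 3 * ‖zetaZ (1 + x + I * y)‖ ^ 4 * ‖zetaZ (1 + x + 2 * I * y)‖ ≤
      C ^ 3 * ‖zetaZ (1 + x + I * y)‖ ^ 4 * (4 * C * T ^ (101 / 100 : ℝ)) := by gcongr
    refine l.trans (le_trans ?_ r)
    have e : ‖zetaZ (1 + x)‖ ^ 3 * ‖zetaZ (1 + x + I * y)‖ ^ 4 * ‖zetaZ (1 + x + 2 * I * y)‖ =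
        (x ^ 3 * ‖(x + I * y : ℂ)‖ ^ 4 * ‖(x + 2 * I * y : ℂ)‖) *
        (‖riemannZeta (1 + x)‖ ^ 3 * ‖riemannZeta (1 + x + I * y)‖ ^ 4 *
          ‖riemannZeta (1 + x + 2 * I * y)‖) := by
      rw [e1, e2, e3]
      simp only [norm_mul, norm_real, Real.norm_of_nonneg hx.le]
      ring
    rw [e]
    exact le_mul_of_one_le_right (by positivity) p
  have hT5 : T ^ (399 / 100 : ℝ) * T ^ (101 / 100 : ℝ) = T ^ 5 := by
    rw [← Real.rpow_add hT0, ← Real.rpow_natCast]; norm_num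
  have hTp : 0 < T ^ (101 / 100 : ℝ) := by positivity
  refine le_of_mul_le_mul_right ?_ hTp
  rw [mul_assoc, hT5]
  rw [mul_assoc, one_div_mul_eq_div, div_le_iff₀ (by positivity)]
  linarith

/-- A lower bound up to the line `re s = 1`: to the right of abscissa `1 + τ`, with `τ` a small
multiple of `(1 + |im s|)^(-1/20)`, it is `zetaZ_lower_off_line`; closer to the line, the value at
abscissa `1 + τ` is moved to `s` by the Lipschitz bound `norm_zetaZ_sub_le`. -/
lemma zetaZ_lower : ∃ c : ℝ, 0 < c ∧ ∀ s : ℂ, 1 < s.re → s.re ≤ 2 →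
    c * (1 + |s.im|) ^ (96 / 100 : ℝ) ≤ ‖zetaZ s‖ := by
  obtain ⟨k, hk, h⟩ := zetaZ_lower_off_line
  obtain ⟨C, hC, hl⟩ := norm_zetaZ_sub_le
  -- on the compact box `|im s| ≤ 1` nonvanishing suffices
  obtain ⟨c0, hc0, hbox⟩ : ∃ c0 : ℝ, 0 < c0 ∧ ∀ s : ℂ, 1 ≤ s.re → s.re ≤ 2 → |s.im| ≤ 1 →
      c0 ≤ ‖zetaZ s‖ := by
    have hK : IsCompact (Set.Icc (1 : ℝ) 2 ×ℂ Set.Icc (-1 : ℝ) 1) :=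
      isCompact_Icc.reProdIm isCompact_Icc
    obtain ⟨s0, hs0, hmin⟩ := hK.exists_isMinOn ⟨1, by simp [mem_reProdIm]⟩
      (differentiable_zetaZ.continuous.norm.continuousOn)
    refine ⟨‖zetaZ s0‖, norm_pos_iff.mpr (zetaZ_ne_zero hs0.1.1), fun s h1 h2 h3 ↦ ?_⟩
    exact hmin ⟨⟨h1, h2⟩, abs_le.mp h3⟩
  set d := min 1 (k / (2 * C)) with hd
  have hd0 : 0 < d := lt_min one_pos (by positivity)
  have hd1 : d ≤ 1 := min_le_left _ _
  have hd2 : C * d ≤ k / 2 := by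
    have : d ≤ k / (2 * C) := min_le_right _ _
    calc C * d ≤ C * (k / (2 * C)) := by gcongr
      _ = k / 2 := by field_simp
  refine ⟨min (c0 / 2) (k * d ^ 3 / 2), lt_min (by positivity) (by positivity), fun s h1 h2 ↦ ?_⟩
  set y := s.im with hy
  set T := 1 + |y| with hT
  have hT1 : 1 ≤ T := by simp [hT]
  have hT0 : 0 < T := by positivity
  rcases le_or_gt |y| 1 with hy1 | hy1
  · refine le_trans ?_ (hbox s h1.le h2 hy1)
    have : T ^ (96 / 100 : ℝ) ≤ 2 := by
      calc T ^ (96 / 100 : ℝ) ≤ T ^ (1 : ℝ) :=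
            Real.rpow_le_rpow_of_exponent_le hT1 (by norm_num)
        _ ≤ 2 := by rw [Real.rpow_one]; linarith
    calc _ ≤ c0 / 2 * 2 := by gcongr; exact min_le_left _ _
      _ = c0 := by ring
  · have main : ∀ x : ℝ, d ^ 4 * T ^ (-(1 / 20) : ℝ) ≤ x → x ≤ 1 →
        k * d ^ 3 * T ^ (96 / 100 : ℝ) ≤ ‖zetaZ (1 + x + I * y)‖ := by
      intro x hx hx1
      have hx0 : 0 < x := lt_of_lt_of_le (by positivity) hx
      refine le_of_pow_le_pow_left₀ (n := 4) (by norm_num) (norm_nonneg _) ?_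
      refine le_trans ?_ (h x y hx0 hx1 hy1.le)
      calc (k * d ^ 3 * T ^ (96 / 100 : ℝ)) ^ 4
          = k ^ 4 * (d ^ 4 * T ^ (-(1 / 20) : ℝ)) ^ 3 * T ^ (399 / 100 : ℝ) := by
            have e1 : (T ^ (96 / 100 : ℝ)) ^ 4 = T ^ (384 / 100 : ℝ) := by
              rw [← Real.rpow_natCast, ← Real.rpow_mul hT0.le]; norm_num
            have e2 : (T ^ (-(1 / 20) : ℝ)) ^ 3 = T ^ (-(15 / 100) : ℝ) := by
              rw [← Real.rpow_natCast, ← Real.rpow_mul hT0.le]; norm_num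
            have e3 : T ^ (-(15 / 100) : ℝ) * T ^ (399 / 100 : ℝ) = T ^ (384 / 100 : ℝ) := by
              rw [← Real.rpow_add hT0]; norm_num
            rw [mul_pow, mul_pow, mul_pow, e1, e2, ← e3]; ring
        _ ≤ _ := by gcongr
    have hTm : T ^ (-(1 / 20) : ℝ) ≤ 1 := Real.rpow_le_one_of_one_le_of_nonpos hT1 (by norm_num)
    set τ := d ^ 4 * T ^ (-(1 / 20) : ℝ) with hτ
    have hτ0 : 0 < τ := by positivity
    have hτ1 : τ ≤ 1 := mul_le_one₀ (pow_le_one₀ hd0.le hd1) (by positivity) hTm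
    have hs : s = 1 + ((s.re - 1 : ℝ) : ℂ) + I * y := by
      apply Complex.ext <;> simp [hy]
    have hmin : min (c0 / 2) (k * d ^ 3 / 2) * T ^ (96 / 100 : ℝ) ≤
        k * d ^ 3 / 2 * T ^ (96 / 100 : ℝ) := by gcongr; exact min_le_right _ _
    refine hmin.trans ?_
    rcases le_or_gt τ (s.re - 1) with hx | hx
    · rw [hs]
      refine le_trans ?_ (main _ hx (by linarith))
      have : 0 ≤ k * d ^ 3 * T ^ (96 / 100 : ℝ) := by positivity
      linarith
    · have m := main τ le_rfl hτ1
      have l := hl |y| s (1 + τ + I * y) (by linarith) (by linarith) le_rfl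
        (by simp; linarith) (by simp; linarith) (by simp)
      have hn : ‖(1 + τ + I * y : ℂ) - s‖ ≤ τ := by
        rw [hs]
        have : (1 + τ + I * y : ℂ) - (1 + ((s.re - 1 : ℝ) : ℂ) + I * y) =
          ((τ - (s.re - 1) : ℝ) : ℂ) := by push_cast; ring
        rw [this, norm_real, Real.norm_of_nonneg (by linarith)]
        linarith
      have l2 : ‖zetaZ (1 + τ + I * y) - zetaZ s‖ ≤ k * d ^ 3 / 2 * T ^ (96 / 100 : ℝ) := by
        calc _ ≤ C * T ^ (101 / 100 : ℝ) * τ := l.trans (by gcongr)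
          _ = C * d * d ^ 3 * T ^ (96 / 100 : ℝ) := by
            have e3 : T ^ (-(1 / 20) : ℝ) * T ^ (101 / 100 : ℝ) = T ^ (96 / 100 : ℝ) := by
              rw [← Real.rpow_add hT0]; norm_num
            rw [hτ, ← e3]; ring
          _ ≤ k / 2 * d ^ 3 * T ^ (96 / 100 : ℝ) := by gcongr
          _ = _ := by ring
      have := norm_sub_norm_le (zetaZ (1 + τ + I * y)) (zetaZ s)
      linarith

/-- `-Z'(s) / (Z(s) s (s + 1))` with `Z(s) = (s - 1) ζ(s)`: the transform of the smoothed prime-counting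
error, with the pole of `ζ` at `1` removed. -/
noncomputable def kernF (s : ℂ) : ℂ := -(deriv zetaZ s / zetaZ s) / (s * (s + 1))

lemma differentiableAt_kernF {s : ℂ} (hs : 0 < s.re) (hz : zetaZ s ≠ 0) :
    DifferentiableAt ℂ kernF s := by
  have h1 : DifferentiableAt ℂ (deriv zetaZ) s := differentiable_zetaZ.deriv s
  have h2 := differentiable_zetaZ s
  have h3 : s * (s + 1) ≠ 0 := by
    refine mul_ne_zero ?_ ?_
    · rintro rfl; simp at hs
    · intro h; have := congrArg re h; simp at this; linarith
  unfold kernF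
  exact ((h1.div h2 hz).neg).div (differentiableAt_id.mul (differentiableAt_id.add_const 1)) h3

/-- Uniformly in `1 < re s ≤ 2`, the first six derivatives of `kernF` are integrable on vertical lines.
This is Cauchy's estimate on a circle of radius proportional to `(1 + |im s|)^(-1/20)`; the circle
may cross the line `re s = 1`, but the Lipschitz bound keeps `Z` away from zero on it. Six
derivatives cost only a factor `(1 + |im s|)^(30/100)`. -/
lemma norm_iteratedDeriv_kernF_le : ∃ C : ℝ, 0 < C ∧ ∀ n ≤ 6, ∀ s : ℂ, 1 < s.re → s.re ≤ 2 →
    ‖iteratedDeriv n kernF s‖ ≤ C * (1 + |s.im|) ^ (-(3 / 2) : ℝ) := by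
  obtain ⟨c, hc, hlow⟩ := zetaZ_lower
  obtain ⟨C, hC, hlip⟩ := norm_zetaZ_sub_le
  obtain ⟨D, hD, hder⟩ := norm_deriv_zetaZ_le
  set r := min (1 / 400) (c / (8 * C)) with hr
  have hr0 : 0 < r := lt_min (by norm_num) (by positivity)
  have hr1 : r ≤ 1 / 400 := min_le_left _ _
  have hr2 : 4 * C * r ≤ c / 2 := by
    have : r ≤ c / (8 * C) := min_le_right _ _
    calc 4 * C * r ≤ 4 * C * (c / (8 * C)) := by gcongr
      _ = c / 2 := by field_simp; norm_num
  refine ⟨720 * (128 * D / c) / r ^ 6, by positivity, fun n hn s h1 h2 ↦ ?_⟩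
  set T := 1 + |s.im| with hT
  have hT1 : 1 ≤ T := by simp [hT]
  have hT0 : 0 < T := by positivity
  have hTm : T ^ (-(1 / 20) : ℝ) ≤ 1 := Real.rpow_le_one_of_one_le_of_nonpos hT1 (by norm_num)
  set R := r * T ^ (-(1 / 20) : ℝ) with hR
  have hR0 : 0 < R := by positivity
  have hR1 : R ≤ 1 / 400 := (mul_le_of_le_one_right hr0.le hTm).trans hr1
  have h2T : (2 * T) ^ (101 / 100 : ℝ) ≤ 4 * T ^ (101 / 100 : ℝ) := by
    rw [Real.mul_rpow (by norm_num) hT0.le]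
    gcongr
    calc (2:ℝ) ^ (101 / 100 : ℝ) ≤ 2 ^ (2 : ℝ) :=
          Real.rpow_le_rpow_of_exponent_le (by norm_num) (by norm_num)
      _ = 4 := by norm_num
  have geo : ∀ z ∈ Metric.closedBall s R, 399 / 400 ≤ z.re ∧ z.re ≤ 5 / 2 ∧
      |z.im| ≤ |s.im| + 1 / 400 ∧ |s.im| ≤ |z.im| + 1 / 400 := by
    intro z hz
    rw [mem_closedBall_iff_norm] at hz
    have hre := abs_le.mp ((abs_re_le_norm (z - s)).trans (hz.trans hR1))
    have him := (abs_im_le_norm (z - s)).trans (hz.trans hR1)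
    rw [sub_re] at hre
    rw [sub_im] at him
    have a1 := abs_sub_abs_le_abs_sub z.im s.im
    have a2 := abs_sub_abs_le_abs_sub s.im z.im
    rw [abs_sub_comm s.im z.im] at a2
    refine ⟨by linarith [hre.1], by linarith [hre.2], by linarith, by linarith⟩
  have low : ∀ z ∈ Metric.closedBall s R, c / 2 * T ^ (96 / 100 : ℝ) ≤ ‖zetaZ z‖ := by
    intro z hz
    obtain ⟨g1, g2, g3, g4⟩ := geo z hz
    have l := hlip (2 * T - 1) z s g1 g2 (by linarith) (by linarith) (by linarith)
      (by linarith [abs_nonneg s.im])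
    rw [mem_closedBall_iff_norm, norm_sub_rev] at hz
    have l2 : ‖zetaZ s - zetaZ z‖ ≤ c / 2 * T ^ (96 / 100 : ℝ) := by
      calc _ ≤ C * (2 * T) ^ (101 / 100 : ℝ) * R := by
            refine l.trans ?_
            rw [show 1 + (2 * T - 1) = 2 * T by ring]
            gcongr
        _ ≤ C * (4 * T ^ (101 / 100 : ℝ)) * R := by gcongr
        _ = 4 * C * r * T ^ (96 / 100 : ℝ) := by
            have e3 : T ^ (-(1 / 20) : ℝ) * T ^ (101 / 100 : ℝ) = T ^ (96 / 100 : ℝ) := by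
              rw [← Real.rpow_add hT0]; norm_num
            rw [hR, ← e3]; ring
        _ ≤ _ := by gcongr
    have := norm_sub_norm_le (zetaZ s) (zetaZ z)
    have := hlow s h1 h2
    linarith
  have ne : ∀ z ∈ Metric.closedBall s R, zetaZ z ≠ 0 := fun z hz ↦
    norm_pos_iff.mp (lt_of_lt_of_le (by positivity) (low z hz))
  have hdiff : DiffContOnCl ℂ kernF (Metric.ball s R) := by
    refine DifferentiableOn.diffContOnCl fun z hz ↦ ?_
    rw [closure_ball _ hR0.ne'] at hz
    exact (differentiableAt_kernF (by linarith [(geo z hz).1]) (ne z hz)).differentiableWithinAt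
  have bd : ∀ z ∈ Metric.sphere s R, ‖kernF z‖ ≤ 128 * D / c * T ^ (-(195 / 100) : ℝ) := by
    intro z hz
    have hz := Metric.sphere_subset_closedBall hz
    obtain ⟨g1, g2, g3, g4⟩ := geo z hz
    have b1 : ‖deriv zetaZ z‖ ≤ D * (4 * T ^ (101 / 100 : ℝ)) := by
      refine (hder z g1 g2).trans ?_
      have : (1 + |z.im|) ^ (101 / 100 : ℝ) ≤ (2 * T) ^ (101 / 100 : ℝ) := by
        gcongr; linarith [abs_nonneg s.im]
      gcongr
      exact this.trans h2T
    have b2 : T / 4 ≤ ‖z‖ := by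
      have := abs_im_le_norm z
      have := (le_abs_self _).trans (abs_re_le_norm z)
      linarith
    have b3 : T / 4 ≤ ‖z + 1‖ := by
      have := abs_im_le_norm (z + 1)
      have := (le_abs_self _).trans (abs_re_le_norm (z + 1))
      simp at *
      linarith
    unfold kernF
    rw [norm_div, norm_neg, norm_div, norm_mul]
    calc _ ≤ D * (4 * T ^ (101 / 100 : ℝ)) / (c / 2 * T ^ (96 / 100 : ℝ)) / (T / 4 * (T / 4)) := by
          gcongr
          exact low z hz
      _ = _ := by
        have e : T ^ (101 / 100 : ℝ) = T ^ (-(195 / 100) : ℝ) * T ^ (96 / 100 : ℝ) * (T * T) := by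
          have : T * T = T ^ (2 : ℝ) := by norm_num; ring
          rw [this, ← Real.rpow_add hT0, ← Real.rpow_add hT0]; norm_num
        rw [e]
        field_simp
        norm_num
  refine (norm_iteratedDeriv_le_of_forall_mem_sphere_norm_le n hR0 hdiff bd).trans ?_
  have hf : ((n.factorial : ℕ) : ℝ) ≤ 720 := by
    exact_mod_cast (Nat.factorial_le hn).trans (by decide)
  have hRn : r ^ 6 * T ^ (-(30 / 100) : ℝ) ≤ R ^ n := by
    calc r ^ 6 * T ^ (-(30 / 100) : ℝ) = R ^ 6 := by
          rw [hR, mul_pow, ← Real.rpow_natCast (T ^ _), ← Real.rpow_mul hT0.le]; norm_num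
      _ ≤ R ^ n := pow_le_pow_of_le_one hR0.le (by linarith) hn
  calc _ ≤ 720 * (128 * D / c * T ^ (-(195 / 100) : ℝ)) / (r ^ 6 * T ^ (-(30 / 100) : ℝ)) := by
        gcongr
    _ = 720 * (128 * D / c) / r ^ 6 * T ^ (-(165 / 100) : ℝ) := by
        have e : T ^ (-(195 / 100) : ℝ) = T ^ (-(165 / 100) : ℝ) * T ^ (-(30 / 100) : ℝ) := by
          rw [← Real.rpow_add hT0]; norm_num
        rw [e]
        field_simp
    _ ≤ _ := by
        have := Real.rpow_le_rpow_of_exponent_le hT1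
          (show (-(165 / 100) : ℝ) ≤ -(3 / 2) by norm_num)
        gcongr

/-! ### Decay of the inverse Fourier transform -/

/-- The point `σ + 2πξi` of the vertical line of abscissa `σ`. -/
noncomputable def vline (σ ξ : ℝ) : ℂ := σ + 2 * Real.pi * ξ * I

lemma vline_re (σ ξ : ℝ) : (vline σ ξ).re = σ := by simp [vline]
lemma vline_im (σ ξ : ℝ) : (vline σ ξ).im = 2 * Real.pi * ξ := by simp [vline]

lemma hasDerivAt_vline (σ ξ : ℝ) : HasDerivAt (vline σ) (2 * Real.pi * I) ξ := by
  have h := ((hasDerivAt_id (ξ : ℂ)).const_mul (2 * Real.pi * I : ℂ)).const_add (σ : ℂ)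
  have h2 := h.comp_ofReal
  refine (h2.congr_deriv (by simp)).congr_of_eventuallyEq (Filter.Eventually.of_forall fun x => ?_)
  simp [vline]; ring

lemma isOpen_re_gt_one : IsOpen {s : ℂ | 1 < s.re} := isOpen_lt continuous_const continuous_re

lemma analyticOnNhd_kernF : AnalyticOnNhd ℂ kernF {s : ℂ | 1 < s.re} := by
  refine DifferentiableOn.analyticOnNhd (fun s hs => ?_) isOpen_re_gt_one
  have hs' : 1 < s.re := hs
  exact (differentiableAt_kernF (by linarith) (zetaZ_ne_zero hs'.le)).differentiableWithinAt

lemma analyticAt_iteratedDeriv_kernF (n : ℕ) {s : ℂ} (hs : 1 < s.re) :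
    AnalyticAt ℂ (iteratedDeriv n kernF) s := by
  rw [iteratedDeriv_eq_iterate]
  exact (analyticOnNhd_kernF s hs).iterated_deriv n

lemma iteratedDeriv_kernF_vline {σ : ℝ} (hσ : 1 < σ) (n : ℕ) :
    iteratedDeriv n (fun ξ => kernF (vline σ ξ)) =
      fun ξ => (2 * Real.pi * I) ^ n * iteratedDeriv n kernF (vline σ ξ) := by
  induction n with
  | zero => simp [iteratedDeriv_zero]
  | succ n ih =>
    ext ξ
    rw [iteratedDeriv_succ, ih]
    have h1 : HasDerivAt (iteratedDeriv n kernF) (iteratedDeriv (n+1) kernF (vline σ ξ))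
        (vline σ ξ) := by
      rw [iteratedDeriv_succ]
      exact (analyticAt_iteratedDeriv_kernF n (by rw [vline_re]; exact hσ)).differentiableAt.hasDerivAt
    have h2 := ((h1.comp ξ (hasDerivAt_vline σ ξ)).const_mul ((2 * Real.pi * I : ℂ) ^ n)).deriv
    refine Eq.trans h2 (by ring)

lemma contDiff_kernF_vline {σ : ℝ} (hσ : 1 < σ) :
    ContDiff ℝ 6 (fun ξ => kernF (vline σ ξ)) := by
  rw [contDiff_iff_contDiffAt]
  intro ξ
  have h1 : ContDiffAt ℝ 6 kernF (vline σ ξ) :=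
    ((analyticOnNhd_kernF _ (by rw [Set.mem_ofPred_eq, vline_re]; exact hσ)).contDiffAt).restrict_scalars ℝ
  refine h1.comp ξ ?_
  unfold vline
  have : ContDiff ℝ 6 (fun ξ : ℝ => (ξ : ℂ)) := Complex.ofRealCLM.contDiff
  exact (contDiff_const.add ((contDiff_const.mul this).mul contDiff_const)).contDiffAt

lemma integrable_weight : MeasureTheory.Integrable (fun ξ : ℝ => (1 + ‖ξ‖) ^ (-(3 / 2) : ℝ)) :=
  integrable_one_add_norm (by norm_num)

lemma exists_iteratedDeriv_vline_bound : ∃ C : ℝ, 0 < C ∧ ∀ σ : ℝ, 1 < σ → σ ≤ 2 → ∀ n ≤ 6,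
    ∀ ξ : ℝ, ‖iteratedDeriv n (fun ξ => kernF (vline σ ξ)) ξ‖ ≤
      C * (1 + ‖ξ‖) ^ (-(3 / 2) : ℝ) := by
  obtain ⟨C, hC, h⟩ := norm_iteratedDeriv_kernF_le
  refine ⟨(2 * Real.pi) ^ 6 * C, by positivity, fun σ h1 h2 n hn ξ => ?_⟩
  rw [iteratedDeriv_kernF_vline h1, norm_mul, norm_pow]
  have hpi := Real.pi_gt_three
  have e : ‖(2 * Real.pi * I : ℂ)‖ = 2 * Real.pi := by simp [abs_of_pos Real.pi_pos]
  rw [e, mul_assoc]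
  have := h n hn (vline σ ξ) (by rwa [vline_re]) (by rwa [vline_re])
  rw [vline_im] at this
  refine mul_le_mul (pow_le_pow_right₀ (by linarith) hn) (this.trans ?_) (norm_nonneg _)
    (by positivity)
  refine mul_le_mul_of_nonneg_left ?_ hC.le
  refine Real.rpow_le_rpow_of_nonpos (by positivity) ?_ (by norm_num)
  rw [abs_mul, abs_of_pos (by positivity : (0:ℝ) < 2 * Real.pi), Real.norm_eq_abs]
  nlinarith [abs_nonneg ξ]

/-- Six integrations by parts, uniformly in the abscissa. -/
lemma exists_fourierInv_bound : ∃ C : ℝ, 0 < C ∧ ∀ σ : ℝ, 1 < σ → σ ≤ 2 → ∀ u : ℝ,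
    |u| ^ 6 * ‖𝓕⁻ (fun ξ => kernF (vline σ ξ)) u‖ ≤ C := by
  obtain ⟨C, hC, h⟩ := exists_iteratedDeriv_vline_bound
  refine ⟨C * (∫ ξ : ℝ, (1 + ‖ξ‖) ^ (-(3 / 2) : ℝ)) + 1, ?_, fun σ h1 h2 u => ?_⟩
  · have : 0 ≤ ∫ ξ : ℝ, (1 + ‖ξ‖) ^ (-(3 / 2) : ℝ) :=
      MeasureTheory.integral_nonneg fun ξ => by positivity
    positivity
  have hcd := contDiff_kernF_vline h1
  have hint : ∀ n : ℕ, (n : ℕ∞) ≤ ((6 : ℕ) : ℕ∞) → MeasureTheory.Integrable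
      (iteratedDeriv n (fun ξ => kernF (vline σ ξ))) := by
    intro n hn
    have hn' : n ≤ 6 := by exact_mod_cast hn
    refine (integrable_weight.const_mul C).mono' ?_ (Filter.Eventually.of_forall (h σ h1 h2 n hn'))
    exact (hcd.continuous_iteratedDeriv n (by exact_mod_cast hn')).aestronglyMeasurable
  have hF := Real.fourier_iteratedDeriv (N := ((6 : ℕ) : ℕ∞)) (n := 6)
    (f := fun ξ => kernF (vline σ ξ)) (by exact_mod_cast hcd) hint le_rfl
  have hFu := congrFun hF (-u)
  have hb : ‖𝓕 (iteratedDeriv 6 (fun ξ => kernF (vline σ ξ))) (-u)‖ ≤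
      C * ∫ ξ : ℝ, (1 + ‖ξ‖) ^ (-(3 / 2) : ℝ) := by
    refine (VectorFourier.norm_fourierIntegral_le_integral_norm _ _ _ _ _).trans ?_
    rw [← MeasureTheory.integral_const_mul]
    exact MeasureTheory.integral_mono (hint 6 le_rfl).norm (integrable_weight.const_mul C)
      (h σ h1 h2 6 le_rfl)
  rw [hFu, norm_smul, norm_pow, ← Real.fourierInv_eq_fourier_neg] at hb
  have e : ‖(2 * Real.pi * I * ((-u : ℝ) : ℂ) : ℂ)‖ = 2 * Real.pi * |u| := by
    simp [abs_of_pos Real.pi_pos]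
  rw [e] at hb
  have hpi := Real.pi_gt_three
  have : |u| ^ 6 ≤ (2 * Real.pi * |u|) ^ 6 :=
    pow_le_pow_left₀ (abs_nonneg u) (by nlinarith [abs_nonneg u]) 6
  linarith [mul_le_mul_of_nonneg_right this (norm_nonneg (𝓕⁻ (fun ξ => kernF (vline σ ξ)) u))]

lemma integrable_kernF_vline {σ : ℝ} (h1 : 1 < σ) (h2 : σ ≤ 2) :
    MeasureTheory.Integrable (fun ξ => kernF (vline σ ξ)) := by
  obtain ⟨C, hC, h⟩ := exists_iteratedDeriv_vline_bound
  refine (integrable_weight.const_mul C).mono'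
    (contDiff_kernF_vline h1).continuous.aestronglyMeasurable (Filter.Eventually.of_forall fun ξ => ?_)
  simpa using h σ h1 h2 0 (by norm_num) ξ

/-! ### Fourier transforms of truncated exponentials -/

/-- The truncated exponential `v ↦ 1_{v > 0} exp(-a v)`. -/
noncomputable def expK (a v : ℝ) : ℂ := Set.indicator (Set.Ioi 0) (fun v : ℝ => cexp (-a * v)) v

lemma integrable_expK {a : ℝ} (ha : 0 < a) : Integrable (expK a) := by
  have := integrableOn_exp_mul_complex_Ioi (a := (-a : ℂ)) (by simpa using ha) 0
  exact (integrable_indicator_iff measurableSet_Ioi).2 this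

lemma fourier_kernel_expK {a : ℝ} (ha : 0 < a) (ξ : ℝ) :
    Integrable (fun v : ℝ => cexp (↑(-2 * Real.pi * v * ξ) * I) • expK a v) ∧
    ∫ v : ℝ, cexp (↑(-2 * Real.pi * v * ξ) * I) • expK a v = 1 / vline a ξ := by
  have e : (fun v : ℝ => cexp (↑(-2 * Real.pi * v * ξ) * I) • expK a v) =
      Set.indicator (Set.Ioi 0) (fun v : ℝ => cexp (-vline a ξ * v)) := by
    ext v
    simp only [expK, Set.indicator]
    split_ifs
    · rw [smul_eq_mul, ← Complex.exp_add]; congr 1; simp [vline]; ring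
    · simp
  have hre : (-vline a ξ).re < 0 := by rw [neg_re, vline_re]; linarith
  rw [e]
  refine ⟨(integrable_indicator_iff measurableSet_Ioi).2 (integrableOn_exp_mul_complex_Ioi hre 0), ?_⟩
  rw [integral_indicator measurableSet_Ioi, integral_exp_mul_complex_Ioi hre]
  simp [neg_div_neg_eq]

lemma fourier_expK_combination {a b c : ℝ} (ha : 0 < a) (hb : 0 < b) (hc : 0 < c)
    (α β γ : ℂ) (ξ : ℝ) :
    𝓕 (fun v => α * expK a v + β * expK b v + γ * expK c v) ξ =
      α / vline a ξ + β / vline b ξ + γ / vline c ξ := by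
  obtain ⟨ia, ea⟩ := fourier_kernel_expK ha ξ
  obtain ⟨ib, eb⟩ := fourier_kernel_expK hb ξ
  obtain ⟨ic, ec⟩ := fourier_kernel_expK hc ξ
  rw [Real.fourier_real_eq_integral_exp_smul]
  have : ∀ v : ℝ, cexp (↑(-2 * Real.pi * v * ξ) * I) •
      (α * expK a v + β * expK b v + γ * expK c v) =
      α * (cexp (↑(-2 * Real.pi * v * ξ) * I) • expK a v) +
      β * (cexp (↑(-2 * Real.pi * v * ξ) * I) • expK b v) +
      γ * (cexp (↑(-2 * Real.pi * v * ξ) * I) • expK c v) := by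
    intro v; simp only [smul_eq_mul]; ring
  simp_rw [this]
  have iab : Integrable (fun v : ℝ => α * (cexp (↑(-2 * Real.pi * v * ξ) * I) • expK a v) +
      β * (cexp (↑(-2 * Real.pi * v * ξ) * I) • expK b v)) :=
    (ia.const_mul α).add (ib.const_mul β)
  rw [integral_add iab (ic.const_mul γ), integral_add (ia.const_mul α) (ib.const_mul β), integral_const_mul, integral_const_mul,
    integral_const_mul, ea, eb, ec]
  ring

lemma continuous_expK_combination {a b c : ℝ} {α β γ : ℂ} (h0 : α + β + γ = 0) :
    Continuous (fun v => α * expK a v + β * expK b v + γ * expK c v) := by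
  have : (fun v => α * expK a v + β * expK b v + γ * expK c v) = fun v : ℝ =>
      α * cexp (-a * (max v 0 : ℝ)) + β * cexp (-b * (max v 0 : ℝ))
        + γ * cexp (-c * (max v 0 : ℝ)) := by
    ext v
    simp only [expK, Set.indicator, Set.mem_Ioi]
    split_ifs with h
    · rw [max_eq_left h.le]
    · rw [max_eq_right (not_lt.1 h)]; simp [h0]
  rw [this]
  fun_prop

/-- Fourier inversion for a combination of truncated exponentials; the condition `α + β + γ = 0` makes
the combination continuous at `0`. -/
lemma fourierInv_expK_combination {a b c : ℝ} (ha : 0 < a) (hb : 0 < b) (hc : 0 < c)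
    {α β γ : ℂ} (h0 : α + β + γ = 0)
    (hint : Integrable (fun ξ => α / vline a ξ + β / vline b ξ + γ / vline c ξ)) (u : ℝ) :
    𝓕⁻ (fun ξ => α / vline a ξ + β / vline b ξ + γ / vline c ξ) u =
      α * expK a u + β * expK b u + γ * expK c u := by
  have hF : 𝓕 (fun v => α * expK a v + β * expK b v + γ * expK c v) =
      fun ξ => α / vline a ξ + β / vline b ξ + γ / vline c ξ :=
    funext fun ξ => fourier_expK_combination ha hb hc α β γ ξ
  have := Continuous.fourierInv_fourier_eq (continuous_expK_combination (a := a) (b := b) (c := c) h0)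
    ((((integrable_expK ha).const_mul α).add ((integrable_expK hb).const_mul β)).add
      ((integrable_expK hc).const_mul γ)) (by rw [hF]; exact hint)
  rw [hF] at this
  exact congrFun this u

lemma vline_ne_zero {a : ℝ} (ha : 0 < a) (ξ : ℝ) : vline a ξ ≠ 0 := by
  intro h
  have := vline_re a ξ
  rw [h] at this; simp at this; linarith

lemma vline_add (a b ξ : ℝ) : vline (a + b) ξ = vline a ξ + b := by
  simp [vline]; ring

lemma continuous_vline (a : ℝ) : Continuous (vline a) :=
  continuous_iff_continuousAt.2 fun ξ => (hasDerivAt_vline a ξ).continuousAt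

lemma norm_sq_vline_ge {a : ℝ} (ha : 1 ≤ a) (ξ : ℝ) : 1 + ξ ^ 2 ≤ ‖vline a ξ‖ ^ 2 := by
  rw [← Complex.normSq_eq_norm_sq, Complex.normSq_apply, vline_re, vline_im]
  have hpi := Real.pi_gt_three
  nlinarith [sq_nonneg ξ, mul_nonneg (sq_nonneg ξ) (by nlinarith : (0:ℝ) ≤ (2 * Real.pi) ^ 2 - 1)]

lemma norm_inv_mul_le {σ : ℝ} (hσ : 1 ≤ σ) (ξ : ℝ) :
    ‖1 / (vline σ ξ * (vline σ ξ + 1))‖ ≤ (1 + ξ ^ 2)⁻¹ := by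
  rw [norm_div, norm_one, norm_mul, ← one_div]
  have h1 := norm_sq_vline_ge hσ ξ
  have h2 : ‖vline σ ξ‖ ≤ ‖vline σ ξ + 1‖ := by
    refine (sq_le_sq₀ (norm_nonneg _) (norm_nonneg _)).1 ?_
    rw [← Complex.normSq_eq_norm_sq, ← Complex.normSq_eq_norm_sq, Complex.normSq_apply,
      Complex.normSq_apply]
    simp only [add_re, one_re, add_im, one_im, vline_re]
    nlinarith
  refine one_div_le_one_div_of_le (by positivity) ?_
  nlinarith [norm_nonneg (vline σ ξ)]

lemma integrable_inv_mul {σ : ℝ} (hσ : 1 ≤ σ) :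
    Integrable (fun ξ => 1 / (vline σ ξ * (vline σ ξ + 1))) := by
  refine integrable_inv_one_add_sq.mono' ?_ (Filter.Eventually.of_forall (norm_inv_mul_le hσ))
  refine (Continuous.div continuous_const ((continuous_vline σ).mul
    ((continuous_vline σ).add continuous_const)) fun ξ => ?_).aestronglyMeasurable
  refine mul_ne_zero (vline_ne_zero (by linarith) ξ) ?_
  have := vline_ne_zero (a := σ + 1) (by linarith) ξ
  rwa [vline_add, ofReal_one] at this

lemma integrable_inv_mul_mul {σ : ℝ} (hσ : 1 < σ) :
    Integrable (fun ξ => 1 / ((vline σ ξ - 1) * (vline σ ξ * (vline σ ξ + 1)))) := by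
  have h0 : ∀ ξ, vline σ ξ - 1 = vline (σ - 1) ξ := fun ξ => by
    rw [sub_eq_add_neg σ, vline_add]; push_cast; ring
  have e : (fun ξ => 1 / ((vline σ ξ - 1) * (vline σ ξ * (vline σ ξ + 1)))) =
      fun ξ => (1 / (vline σ ξ * (vline σ ξ + 1))) * (vline (σ - 1) ξ)⁻¹ := by
    ext ξ; rw [h0]; field_simp
  rw [e]
  refine (integrable_inv_mul hσ.le).mul_bdd (c := (σ - 1)⁻¹) ?_ (Filter.Eventually.of_forall fun ξ => ?_)
  · exact (Continuous.inv₀ (continuous_vline _)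
      fun ξ => vline_ne_zero (by linarith) ξ).aestronglyMeasurable
  · rw [norm_inv]
    refine inv_anti₀ (by linarith) ?_
    have := Complex.re_le_norm (vline (σ - 1) ξ)
    rwa [vline_re] at this

lemma fourierInv_inv_mul {σ : ℝ} (hσ : 1 ≤ σ) (u : ℝ) :
    𝓕⁻ (fun ξ => 1 / (vline σ ξ * (vline σ ξ + 1))) u = expK σ u - expK (σ + 1) u := by
  have e : (fun ξ => 1 / (vline σ ξ * (vline σ ξ + 1))) =
      fun ξ => (1 : ℂ) / vline σ ξ + (-1) / vline (σ + 1) ξ + 0 / vline σ ξ := by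
    ext ξ
    have h1 := vline_ne_zero (a := σ) (by linarith) ξ
    have h2 := vline_ne_zero (a := σ + 1) (by linarith) ξ
    rw [vline_add, ofReal_one] at *
    field_simp
    ring
  have hi := integrable_inv_mul hσ
  rw [e] at hi ⊢
  rw [fourierInv_expK_combination (by linarith) (by linarith) (by linarith) (by ring) hi]
  ring

lemma fourierInv_inv_mul_mul {σ : ℝ} (hσ : 1 < σ) (u : ℝ) :
    𝓕⁻ (fun ξ => 1 / ((vline σ ξ - 1) * (vline σ ξ * (vline σ ξ + 1)))) u =
      (expK (σ - 1) u - 2 * expK σ u + expK (σ + 1) u) / 2 := by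
  have h0 : ∀ ξ, vline σ ξ - 1 = vline (σ - 1) ξ := fun ξ => by
    rw [sub_eq_add_neg σ, vline_add]; push_cast; ring
  have e : (fun ξ => 1 / ((vline σ ξ - 1) * (vline σ ξ * (vline σ ξ + 1)))) =
      fun ξ => (1 / 2 : ℂ) / vline (σ - 1) ξ + (-1) / vline σ ξ + (1 / 2) / vline (σ + 1) ξ := by
    ext ξ
    have h1 := vline_ne_zero (a := σ) (by linarith) ξ
    have h2 := vline_ne_zero (a := σ + 1) (by linarith) ξ
    have h3 := vline_ne_zero (a := σ - 1) (by linarith) ξ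
    rw [vline_add, ofReal_one] at *
    rw [← h0] at *
    field_simp
    ring
  have hi := integrable_inv_mul_mul hσ
  rw [e] at hi ⊢
  rw [fourierInv_expK_combination (by linarith) (by linarith) (by linarith) (by ring) hi]
  ring

/-! ### The explicit formula for the smoothed Chebyshev function -/

/-- The Dirichlet series of `-ζ'/ζ`, minus the contribution `1 / (s - 1)` of the pole. -/
lemma kernF_eq_sub {s : ℂ} (hs : 1 < s.re) :
    kernF s = LSeries (fun n => (ArithmeticFunction.vonMangoldt n : ℂ)) s * (1 / (s * (s + 1))) -
      1 / ((s - 1) * (s * (s + 1))) := by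
  have hs1 : s ≠ 1 := fun h => by rw [h] at hs; simp at hs
  have hz : riemannZeta s ≠ 0 := riemannZeta_ne_zero_of_one_le_re hs.le
  have hd : deriv zetaZ s = riemannZeta s + (s - 1) * deriv riemannZeta s := by
    have h1 : HasDerivAt (fun s => (s - 1) * riemannZeta s)
        (1 * riemannZeta s + (s - 1) * deriv riemannZeta s) s :=
      ((hasDerivAt_id s).sub_const 1).mul (differentiableAt_riemannZeta hs1).hasDerivAt
    rw [one_mul] at h1
    refine (h1.congr_of_eventuallyEq ?_).deriv
    filter_upwards [isOpen_ne.mem_nhds hs1] with z hz using zetaZ_of_ne hz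
  have h1 : s - 1 ≠ 0 := sub_ne_zero.2 hs1
  have h0 : s ≠ 0 := fun h => by rw [h] at hs; simp at hs; linarith
  have h2 : s + 1 ≠ 0 := fun h => by
    have := congrArg Complex.re h
    simp at this; linarith
  rw [ArithmeticFunction.LSeries_vonMangoldt_eq_deriv_riemannZeta_div hs, kernF, hd, zetaZ_of_ne hs1]
  field_simp
  ring

lemma term_vline (σ ξ u : ℝ) (n : ℕ) :
    cexp (2 * Real.pi * ξ * u * I) *
      LSeries.term (fun n => (ArithmeticFunction.vonMangoldt n : ℂ)) (vline σ ξ) n =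
    ((ArithmeticFunction.vonMangoldt n * (n : ℝ) ^ (-σ) : ℝ) : ℂ) *
      cexp (2 * Real.pi * ξ * (u - Real.log n : ℝ) * I) := by
  rcases Nat.eq_zero_or_pos n with rfl | hn
  · simp
  have hn' : (n : ℂ) ≠ 0 := by exact_mod_cast hn.ne'
  have hnr : (0 : ℝ) < n := by exact_mod_cast hn
  rw [LSeries.term_of_ne_zero hn.ne', Complex.cpow_def_of_ne_zero hn', div_eq_mul_inv, ← Complex.exp_neg,
    Real.rpow_def_of_pos hnr, ofReal_mul, ofReal_exp, ← Complex.natCast_log]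
  have : ∀ a b c d e : ℂ, a + c = d + e → cexp a * (b * cexp c) = b * cexp d * cexp e := by
    intro a b c d e h
    rw [mul_left_comm, ← Complex.exp_add, h, Complex.exp_add]; ring
  apply this
  simp [vline]
  ring

lemma fourierInv_real_eq (f : ℝ → ℂ) (u : ℝ) :
    𝓕⁻ f u = ∫ ξ : ℝ, cexp (2 * Real.pi * ξ * u * I) * f ξ := by
  rw [Real.fourierInv_eq']
  congr 1
  ext ξ
  simp only [smul_eq_mul]
  congr 2
  simp
  ring

/-- Termwise Fourier inversion of the Dirichlet series on the line of abscissa `σ`. -/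
lemma hasSum_fourierInv_kernF {σ : ℝ} (hσ : 1 < σ) (hσ2 : σ ≤ 2) (u : ℝ) :
    HasSum (fun n : ℕ => ((ArithmeticFunction.vonMangoldt n * (n : ℝ) ^ (-σ) : ℝ) : ℂ) *
      (expK σ (u - Real.log n) - expK (σ + 1) (u - Real.log n)))
    (𝓕⁻ (fun ξ => kernF (vline σ ξ)) u +
      (expK (σ - 1) u - 2 * expK σ u + expK (σ + 1) u) / 2) := by
  set w : ℝ → ℂ := fun ξ => 1 / (vline σ ξ * (vline σ ξ + 1)) with hw
  have hwi : Integrable w := integrable_inv_mul hσ.le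
  set F : ℕ → ℝ → ℂ := fun n ξ =>
    ((ArithmeticFunction.vonMangoldt n * (n : ℝ) ^ (-σ) : ℝ) : ℂ) *
      (cexp (2 * Real.pi * ξ * (u - Real.log n : ℝ) * I) * w ξ) with hF
  have hphase : ∀ y ξ : ℝ, ‖cexp (2 * Real.pi * ξ * y * I)‖ = 1 := fun y ξ => by
    have := Complex.norm_exp_ofReal_mul_I (2 * Real.pi * ξ * y)
    push_cast at this; exact this
  have hphi : ∀ y : ℝ, ∀ g : ℝ → ℂ, Integrable g →
      Integrable (fun ξ : ℝ => cexp (2 * Real.pi * ξ * y * I) * g ξ) := fun y g hg => by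
    refine hg.bdd_mul (c := 1) (by fun_prop) (Filter.Eventually.of_forall fun ξ => (hphase y ξ).le)
  have hFi : ∀ n, Integrable (F n) := fun n => (hphi _ w hwi).const_mul _
  have hsumΛ : Summable fun n : ℕ => ArithmeticFunction.vonMangoldt n * (n : ℝ) ^ (-σ) := by
    have h := (ArithmeticFunction.LSeriesSummable_vonMangoldt
      (s := (σ : ℂ)) (by simpa using hσ)).norm
    refine h.congr fun n => ?_
    rcases Nat.eq_zero_or_pos n with rfl | hn
    · simp
    have hnr : (0 : ℝ) < n := by exact_mod_cast hn
    rw [LSeries.term_of_ne_zero hn.ne', norm_div, Complex.norm_natCast_cpow_of_pos hn,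
      Real.rpow_neg hnr.le, div_eq_mul_inv]
    simp [abs_of_nonneg ArithmeticFunction.vonMangoldt_nonneg]
  have hnorm : ∀ n, ∫ ξ, ‖F n ξ‖ =
      (ArithmeticFunction.vonMangoldt n * (n : ℝ) ^ (-σ)) * ∫ ξ, ‖w ξ‖ := fun n => by
    rw [← integral_const_mul]
    congr 1
    ext ξ
    have : 0 ≤ ArithmeticFunction.vonMangoldt n * (n : ℝ) ^ (-σ) :=
      mul_nonneg ArithmeticFunction.vonMangoldt_nonneg (by positivity)
    rw [hF]
    simp only
    rw [norm_mul, norm_mul, hphase, one_mul, norm_real, Real.norm_of_nonneg this]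
  have hmain := hasSum_integral_of_summable_integral_norm (F := F) hFi
    (by simp_rw [hnorm]; exact hsumΛ.mul_right _)
  have hterm : ∀ n, ∫ ξ, F n ξ = ((ArithmeticFunction.vonMangoldt n * (n : ℝ) ^ (-σ) : ℝ) : ℂ) *
      (expK σ (u - Real.log n) - expK (σ + 1) (u - Real.log n)) := fun n => by
    rw [← fourierInv_inv_mul hσ.le, fourierInv_real_eq, ← integral_const_mul]
  simp_rw [hterm] at hmain
  convert! hmain using 1
  rw [← fourierInv_inv_mul_mul hσ, fourierInv_real_eq, fourierInv_real_eq]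
  have hpi := hphi u _ (integrable_inv_mul_mul hσ)
  have hki : Integrable (fun ξ : ℝ => cexp (2 * Real.pi * ξ * u * I) * kernF (vline σ ξ)) :=
    hphi u _ (integrable_kernF_vline hσ hσ2)
  rw [← integral_add hki hpi]
  congr 1
  ext ξ
  rw [kernF_eq_sub (by rwa [vline_re]), ← mul_add, sub_add_cancel, LSeries, ← tsum_mul_right,
    ← tsum_mul_left]
  congr 1
  ext n
  rw [← mul_assoc, term_vline, mul_assoc]

/-- The smoothed Chebyshev function `∑_{n ≤ x} Λ(n) (x - n)`. -/
noncomputable def psiOne (x : ℝ) : ℝ :=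
  ∑ n ∈ Finset.Ioc 0 ⌊x⌋₊, ArithmeticFunction.vonMangoldt n * (x - n)

/-- The explicit form of the inverse transform at `log x`: the error term of `psiOne`, weighted by
`x^(-(σ + 1))`. -/
lemma fourierInv_kernF_eq {σ x : ℝ} (hσ : 1 < σ) (hσ2 : σ ≤ 2) (hx : 1 < x) :
    𝓕⁻ (fun ξ => kernF (vline σ ξ)) (Real.log x) =
      ((x ^ (-(σ + 1)) * (psiOne x - (x - 1) ^ 2 / 2) : ℝ) : ℂ) := by
  have hx0 : 0 < x := by linarith
  have hK : ∀ a y : ℝ, 0 < y → expK a (Real.log y) = if 1 < y then ((y ^ (-a) : ℝ) : ℂ) else 0 := by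
    intro a y hy
    simp only [expK, Set.indicator, Set.mem_Ioi, Real.log_pos_iff hy.le]
    split_ifs with h
    · rw [Real.rpow_def_of_pos hy, ofReal_exp]; congr 1; push_cast; ring
    · rfl
  have hs := hasSum_fourierInv_kernF hσ hσ2 (Real.log x)
  have hfin : HasSum (fun n : ℕ => ((ArithmeticFunction.vonMangoldt n * (n : ℝ) ^ (-σ) : ℝ) : ℂ) *
      (expK σ (Real.log x - Real.log n) - expK (σ + 1) (Real.log x - Real.log n)))
      (∑ n ∈ Finset.Ioc 0 ⌊x⌋₊,
        ((x ^ (-(σ + 1)) * (ArithmeticFunction.vonMangoldt n * (x - n)) : ℝ) : ℂ)) := by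
    have key : ∀ n : ℕ, 0 < n → ((ArithmeticFunction.vonMangoldt n * (n : ℝ) ^ (-σ) : ℝ) : ℂ) *
      (expK σ (Real.log x - Real.log n) - expK (σ + 1) (Real.log x - Real.log n)) =
      if (n : ℝ) < x then ((x ^ (-(σ + 1)) * (ArithmeticFunction.vonMangoldt n * (x - n)) : ℝ) : ℂ)
        else 0 := by
      intro n hn
      have hnr : (0 : ℝ) < n := by exact_mod_cast hn
      rw [← Real.log_div hx0.ne' hnr.ne', hK _ _ (by positivity), hK _ _ (by positivity)]
      simp only [one_lt_div hnr]
      split_ifs with h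
      · rw [← ofReal_sub, ← ofReal_mul]
        congr 1
        have e1 : (x / n) ^ (-σ) = x ^ (-(σ + 1)) * x / (n : ℝ) ^ (-σ) := by
          rw [Real.div_rpow hx0.le hnr.le, ← Real.rpow_add_one hx0.ne']; ring_nf
        have e2 : (x / n) ^ (-(σ + 1)) = x ^ (-(σ + 1)) * n / (n : ℝ) ^ (-σ) := by
          rw [Real.div_rpow hx0.le hnr.le, show -σ = -(σ + 1) + 1 by ring, Real.rpow_add_one hnr.ne']
          field_simp
        have : (n : ℝ) ^ (-σ) ≠ 0 := (Real.rpow_pos_of_pos hnr _).ne'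
        rw [e1, e2]
        field_simp
      · simp
    have hE : ∑ n ∈ Finset.Ioc 0 ⌊x⌋₊,
        ((x ^ (-(σ + 1)) * (ArithmeticFunction.vonMangoldt n * (x - n)) : ℝ) : ℂ) =
        ∑ n ∈ Finset.Ioc 0 ⌊x⌋₊, ((ArithmeticFunction.vonMangoldt n * (n : ℝ) ^ (-σ) : ℝ) : ℂ) *
        (expK σ (Real.log x - Real.log n) - expK (σ + 1) (Real.log x - Real.log n)) := by
      refine Finset.sum_congr rfl fun n hn => ?_
      rw [Finset.mem_Ioc] at hn
      rw [key n hn.1]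
      split_ifs with h
      · rfl
      · have : (n : ℝ) = x := le_antisymm ((Nat.le_floor_iff hx0.le).1 hn.2) (not_lt.1 h)
        simp [this]
    rw [hE]
    refine hasSum_sum_of_ne_finset_zero fun n hn => ?_
    rcases Nat.eq_zero_or_pos n with rfl | hn0
    · simp
    rw [key n hn0, if_neg]
    intro h
    exact hn (Finset.mem_Ioc.2 ⟨hn0, Nat.le_floor h.le⟩)
  have heq := hs.unique hfin
  rw [eq_sub_of_add_eq heq, hK _ _ hx0, hK _ _ hx0, hK _ _ hx0, if_pos hx, if_pos hx, if_pos hx,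
    ← ofReal_sum, ← Finset.mul_sum]
  have e1 : x ^ (-σ) = x ^ (-(σ + 1)) * x := by
    rw [← Real.rpow_add_one hx0.ne']; ring_nf
  have e2 : x ^ (-(σ - 1)) = x ^ (-(σ + 1)) * x ^ 2 := by
    rw [← Real.rpow_add_natCast hx0.ne']; congr 1; push_cast; ring
  rw [e1, e2]
  unfold psiOne
  push_cast
  ring

/-- The choice `σ = 1 + 1 / log x` makes the weight `x^(σ + 1)` equal to `e x²`, and the constant in
`exists_fourierInv_bound` does not depend on `σ`. -/
lemma exists_psiOne_bound : ∃ C : ℝ, 0 < C ∧ ∀ x : ℝ, Real.exp 1 ≤ x →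
    |psiOne x - (x - 1) ^ 2 / 2| ≤ C * x ^ 2 / Real.log x ^ 6 := by
  obtain ⟨C, hC, h⟩ := exists_fourierInv_bound
  refine ⟨C * Real.exp 1, by positivity, fun x hx => ?_⟩
  have hx0 : 0 < x := (Real.exp_pos 1).trans_le hx
  have hx1 : 1 < x := lt_of_lt_of_le (by simp) hx
  have hl : 1 ≤ Real.log x := (Real.le_log_iff_exp_le hx0).2 hx
  have hl0 : 0 < Real.log x := by linarith
  have hσ : 1 < 1 + 1 / Real.log x := by linarith [one_div_pos.2 hl0]
  have hσ2 : 1 + 1 / Real.log x ≤ 2 := by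
    have : 1 / Real.log x ≤ 1 := by rw [div_le_one hl0]; exact hl
    linarith
  have hb := h _ hσ hσ2 (Real.log x)
  rw [fourierInv_kernF_eq hσ hσ2 hx1, norm_real, Real.norm_eq_abs, abs_mul, abs_of_pos hl0,
    abs_of_pos (Real.rpow_pos_of_pos hx0 _)] at hb
  have e : x ^ (-(1 + 1 / Real.log x + 1)) = (Real.exp 1 * x ^ 2)⁻¹ := by
    rw [Real.rpow_neg hx0.le, show 1 + 1 / Real.log x + 1 = 1 / Real.log x + (2 : ℕ) by push_cast; ring,
      Real.rpow_add_natCast hx0.ne', Real.rpow_def_of_pos hx0, mul_one_div_cancel hl0.ne']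
  rw [e] at hb
  rw [le_div_iff₀ (by positivity)]
  rw [← mul_assoc, mul_comm (Real.log x ^ 6), mul_assoc, inv_mul_le_iff₀ (by positivity)] at hb
  linarith

/-! ### Removing the smoothing -/

/-- A difference quotient of `psiOne` lies between the values of `ψ` at the two end points. -/
lemma psiOne_sub_bounds {x y : ℝ} (hx : 0 ≤ x) (hxy : x ≤ y) :
    (y - x) * Chebyshev.psi x ≤ psiOne y - psiOne x ∧
      psiOne y - psiOne x ≤ (y - x) * Chebyshev.psi y := by
  have hfl : ⌊x⌋₊ ≤ ⌊y⌋₊ := Nat.floor_mono hxy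
  have hsplit : ∀ f : ℕ → ℝ, ∑ n ∈ Finset.Ioc 0 ⌊y⌋₊, f n =
      ∑ n ∈ Finset.Ioc 0 ⌊x⌋₊, f n + ∑ n ∈ Finset.Ioc ⌊x⌋₊ ⌊y⌋₊, f n := fun f => by
    rw [← Finset.sum_Ioc_consecutive f (Nat.zero_le _) hfl]
  have hdiff : psiOne y - psiOne x = (y - x) * Chebyshev.psi x +
      ∑ n ∈ Finset.Ioc ⌊x⌋₊ ⌊y⌋₊, ArithmeticFunction.vonMangoldt n * (y - n) := by
    unfold psiOne Chebyshev.psi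
    rw [hsplit, Finset.mul_sum, add_sub_right_comm, ← Finset.sum_sub_distrib]
    congr 1
    exact Finset.sum_congr rfl fun n _ => by ring
  have hb : ∀ n ∈ Finset.Ioc ⌊x⌋₊ ⌊y⌋₊, x ≤ n ∧ (n : ℝ) ≤ y := fun n hn => by
    rw [Finset.mem_Ioc] at hn
    exact ⟨((Nat.floor_lt hx).1 hn.1).le, (Nat.le_floor_iff (hx.trans hxy)).1 hn.2⟩
  have hpsi : Chebyshev.psi y = Chebyshev.psi x +
      ∑ n ∈ Finset.Ioc ⌊x⌋₊ ⌊y⌋₊, ArithmeticFunction.vonMangoldt n := by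
    unfold Chebyshev.psi; exact hsplit _
  constructor
  · rw [hdiff]
    refine le_add_of_nonneg_right (Finset.sum_nonneg fun n hn => ?_)
    exact mul_nonneg ArithmeticFunction.vonMangoldt_nonneg (by linarith [(hb n hn).2])
  · rw [hdiff, hpsi, mul_add, Finset.mul_sum]
    refine add_le_add_right (Finset.sum_le_sum fun n hn => ?_) _
    rw [mul_comm (y - x)]
    exact mul_le_mul_of_nonneg_left (by linarith [(hb n hn).1]) ArithmeticFunction.vonMangoldt_nonneg

lemma exists_log_pow_le : ∃ x₀ : ℝ, Real.exp 2 ≤ x₀ ∧ ∀ x : ℝ, x₀ ≤ x → Real.log x ^ 6 ≤ x := by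
  have h := (Real.isLittleO_pow_log_id_atTop (n := 6)).bound one_pos
  obtain ⟨a, ha⟩ := Filter.eventually_atTop.1 h
  refine ⟨max a (Real.exp 2), le_max_right _ _, fun x hx => ?_⟩
  have := ha x ((le_max_left _ _).trans hx)
  have hx0 : 0 < x := (Real.exp_pos 2).trans_le ((le_max_right _ _).trans hx)
  rw [one_mul, id, Real.norm_of_nonneg hx0.le] at this
  exact (le_abs_self _).trans this

/-- Differencing `psiOne` with step `h = x / log³ x`: the main term errs by `O(h)`, and the error term
`O(x² / log⁶ x) = O(h²)` of `psiOne` becomes `O(h)` after division by `h`. -/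
lemma exists_psi_bound : ∃ C x₀ : ℝ, 0 < C ∧ Real.exp 2 ≤ x₀ ∧ ∀ x : ℝ, x₀ ≤ x →
    |Chebyshev.psi x - x| ≤ C * (x / Real.log x ^ 3) := by
  obtain ⟨C, hC, hP⟩ := exists_psiOne_bound
  obtain ⟨x₀, hx₀, hlog⟩ := exists_log_pow_le
  refine ⟨65 * C + 2, x₀, by positivity, hx₀, fun x hx => ?_⟩
  have hx2 : Real.exp 2 ≤ x := hx₀.trans hx
  have hx0 : 0 < x := (Real.exp_pos 2).trans_le hx2
  have hl : 2 ≤ Real.log x := (Real.le_log_iff_exp_le hx0).2 hx2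
  set L := Real.log x with hL
  have hL3 : 8 ≤ L ^ 3 := by
    calc (8 : ℝ) = 2 ^ 3 := by norm_num
      _ ≤ L ^ 3 := pow_le_pow_left₀ (by norm_num) hl 3
  set h := x / L ^ 3 with hh
  have hh0 : 0 < h := by positivity
  have hLh : h * L ^ 3 = x := by rw [hh]; field_simp
  have hhx : h ≤ x / 2 := by nlinarith
  have hh1 : 1 ≤ h := by
    rw [hh, one_le_div (by positivity)]
    refine le_trans ?_ (hlog x hx)
    exact pow_le_pow_right₀ (by linarith) (by norm_num)
  have he : Real.exp 1 ≤ x / 2 := by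
    have : Real.exp 2 = Real.exp 1 * Real.exp 1 := by rw [← Real.exp_add]; norm_num
    nlinarith [Real.add_one_le_exp 1]
  -- the error term `x ^ 2 / log x ^ 6` is exactly `h ^ 2`
  have herr : x ^ 2 / L ^ 6 = h ^ 2 := by rw [hh]; field_simp
  have hE0 : |psiOne x - (x - 1) ^ 2 / 2| ≤ C * h ^ 2 := by
    rw [← herr, ← mul_div_assoc]; exact hP x (by linarith)
  have hE1 : |psiOne (x + h) - (x + h - 1) ^ 2 / 2| ≤ 4 * C * h ^ 2 := by
    refine (hP (x + h) (by linarith)).trans ?_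
    rw [← herr, ← mul_div_assoc]
    have : L ≤ Real.log (x + h) := Real.log_le_log hx0 (by linarith)
    refine div_le_div₀ (by positivity) ?_ (by positivity) (pow_le_pow_left₀ (by linarith) this 6)
    have : (x + h) ^ 2 ≤ 4 * x ^ 2 := by nlinarith
    nlinarith
  have hE2 : |psiOne (x - h) - (x - h - 1) ^ 2 / 2| ≤ 64 * C * h ^ 2 := by
    refine (hP (x - h) (by linarith)).trans ?_
    have hl2 : L / 2 ≤ Real.log (x - h) := by
      have h1 : Real.log (x / 2) ≤ Real.log (x - h) := Real.log_le_log (by linarith) (by linarith)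
      rw [Real.log_div hx0.ne' (by norm_num)] at h1
      linarith [Real.log_two_lt_d9]
    have e : 64 * C * h ^ 2 = C * x ^ 2 / (L / 2) ^ 6 := by
      rw [← herr]; field_simp; ring
    rw [e]
    refine div_le_div₀ (by positivity) ?_ (by positivity) (pow_le_pow_left₀ (by linarith) hl2 6)
    refine mul_le_mul_of_nonneg_left ?_ hC.le
    nlinarith
  have hup := (psiOne_sub_bounds hx0.le (by linarith : x ≤ x + h)).1
  have hlo := (psiOne_sub_bounds (by linarith) (by linarith : x - h ≤ x)).2
  rw [abs_le] at hE0 hE1 hE2 ⊢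
  constructor
  · have : h * (x - 1 - h / 2 - 65 * C * h) ≤ h * Chebyshev.psi x := by
      nlinarith [hE0.1, hE2.2]
    have := le_of_mul_le_mul_left this hh0
    linarith
  · have : h * Chebyshev.psi x ≤ h * (x - 1 + h / 2 + 5 * C * h) := by
      nlinarith [hE0.1, hE1.2]
    have := le_of_mul_le_mul_left this hh0
    nlinarith

/-- The prime number theorem in the form `θ(x) = x + O(x / log³ x)`. -/
lemma exists_theta_bound : ∃ C x₀ : ℝ, 0 < C ∧ Real.exp 2 ≤ x₀ ∧ ∀ x : ℝ, x₀ ≤ x →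
    |Chebyshev.theta x - x| ≤ C * (x / Real.log x ^ 3) := by
  obtain ⟨C, x₁, hC, hx₁, hP⟩ := exists_psi_bound
  obtain ⟨x₂, hx₂, hlog⟩ := exists_log_pow_le
  obtain ⟨D, hD⟩ := Chebyshev.psi_sub_theta_le_mul_sqrt
  refine ⟨C + |D|, max x₁ x₂, by positivity, le_max_of_le_left hx₁, fun x hx => ?_⟩
  have h1 := hP x ((le_max_left _ _).trans hx)
  have h2 := hlog x ((le_max_right _ _).trans hx)
  have hx2 : Real.exp 2 ≤ x := hx₁.trans ((le_max_left _ _).trans hx)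
  have hx0 : 0 < x := (Real.exp_pos 2).trans_le hx2
  have hl : 2 ≤ Real.log x := (Real.le_log_iff_exp_le hx0).2 hx2
  have h3 : √x ≤ x / Real.log x ^ 3 := by
    rw [le_div_iff₀ (by positivity)]
    have : Real.log x ^ 3 ≤ √x := Real.le_sqrt_of_sq_le (by rw [← pow_mul]; exact h2)
    calc √x * Real.log x ^ 3 ≤ √x * √x := mul_le_mul_of_nonneg_left this (Real.sqrt_nonneg _)
      _ = x := Real.mul_self_sqrt hx0.le
  have h4 := hD x
  have h5 := Chebyshev.theta_le_psi x
  have h6 : D * √x ≤ |D| * (x / Real.log x ^ 3) :=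
    mul_le_mul (le_abs_self D) h3 (Real.sqrt_nonneg _) (abs_nonneg _)
  have h7 : 0 ≤ |D| * (x / Real.log x ^ 3) := by positivity
  rw [abs_le] at h1 ⊢
  constructor <;> nlinarith [h1.1, h1.2]

end Analytic

section PartialSummation

open MeasureTheory

/-! ### Partial summation -/

/-- `∑_{p ≤ x} 1 / p - log log x`. -/
noncomputable def mertensSum (x : ℝ) : ℝ :=
  (∑ p ∈ (Finset.range (⌊x⌋₊ + 1)).filter Nat.Prime, (1 : ℝ) / p) - Real.log (Real.log x)

/-- The derivative of `1 / (t log t)`. -/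
noncomputable def wderiv (t : ℝ) : ℝ := -((Real.log t + 1) / (t * Real.log t) ^ 2)

lemma hasDerivAt_inv_mul_log {t : ℝ} (ht : 1 < t) :
    HasDerivAt (fun t => (t * Real.log t)⁻¹) (wderiv t) t := by
  have h0 : t ≠ 0 := by linarith
  have hl : Real.log t ≠ 0 := (Real.log_pos ht).ne'
  have h := ((hasDerivAt_id t).mul (Real.hasDerivAt_log h0)).inv (mul_ne_zero h0 hl)
  refine h.congr_deriv ?_
  simp [wderiv, h0]
  ring

lemma hasDerivAt_primitive {t : ℝ} (ht : 1 < t) :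
    HasDerivAt (fun t => (Real.log t)⁻¹ - Real.log (Real.log t)) (wderiv t * t) t := by
  have h0 : t ≠ 0 := by linarith
  have hl : Real.log t ≠ 0 := (Real.log_pos ht).ne'
  have h := ((Real.hasDerivAt_log h0).inv hl).sub ((Real.hasDerivAt_log h0).log hl)
  refine h.congr_deriv ?_
  unfold wderiv
  field_simp
  ring

lemma hasDerivAt_inv_log_cube {t : ℝ} (ht : 1 < t) (C : ℝ) :
    HasDerivAt (fun t => -(C * ((Real.log t)⁻¹) ^ 3)) (3 * C / (t * Real.log t ^ 4)) t := by
  have h0 : t ≠ 0 := by linarith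
  have hl : Real.log t ≠ 0 := (Real.log_pos ht).ne'
  have h := ((((Real.hasDerivAt_log h0).inv hl).pow 3).const_mul C).neg
  refine h.congr_deriv ?_
  simp
  field_simp

lemma continuousOn_wderiv {x y : ℝ} (hx : 1 < x) : ContinuousOn wderiv (Set.Icc x y) := by
  have h0 : ∀ t ∈ Set.Icc x y, t ≠ 0 := fun t ht => by linarith [ht.1]
  have hc : ContinuousOn Real.log (Set.Icc x y) := Real.continuousOn_log.mono fun t ht => h0 t ht
  refine ((hc.add continuousOn_const).div ((continuousOn_id.mul hc).pow 2) fun t ht => ?_).neg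
  exact pow_ne_zero 2 (mul_ne_zero (h0 t ht) (Real.log_pos (by linarith [ht.1])).ne')

/-- Abel summation of `∑ log p · 1 / (p log p)` against `θ`; the main term integrates exactly to
`log log y - log log x`, which leaves only the error `θ(t) - t`. -/
lemma mertensSum_sub {x y : ℝ} (hx : 1 < x) (hxy : x ≤ y) :
    IntervalIntegrable (fun t => wderiv t * (Chebyshev.theta t - t)) volume x y ∧
    mertensSum y - mertensSum x = (y * Real.log y)⁻¹ * (Chebyshev.theta y - y) -
      (x * Real.log x)⁻¹ * (Chebyshev.theta x - x) -
      ∫ t in x..y, wderiv t * (Chebyshev.theta t - t) := by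
  set c : ℕ → ℝ := fun n => if n.Prime then Real.log n else 0 with hc
  have hθ : ∀ t : ℝ, ∑ k ∈ Finset.Icc 0 ⌊t⌋₊, c k = Chebyshev.theta t := fun t => by
    rw [Chebyshev.theta_eq_sum_Icc, Finset.sum_filter]
  have hmem : ∀ t ∈ Set.Icc x y, 1 < t := fun t ht => hx.trans_le ht.1
  have hdE : Set.EqOn (deriv fun t : ℝ => (t * Real.log t)⁻¹) wderiv (Set.Icc x y) :=
    fun t ht => (hasDerivAt_inv_mul_log (hmem t ht)).deriv
  have hwc := continuousOn_wderiv (y := y) hx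
  have hwi : IntegrableOn wderiv (Set.Icc x y) := hwc.integrableOn_Icc
  have hdi : IntegrableOn (deriv fun t : ℝ => (t * Real.log t)⁻¹) (Set.Icc x y) :=
    hwi.congr_fun hdE.symm measurableSet_Icc
  have habel := sum_mul_eq_sub_sub_integral_mul c (by linarith) hxy
    (fun t ht => (hasDerivAt_inv_mul_log (hmem t ht)).differentiableAt) hdi
  have hθi : IntegrableOn (fun t => wderiv t * Chebyshev.theta t) (Set.Icc x y) := by
    have := integrableOn_mul_sum_Icc c (m := 0) (by linarith : 0 ≤ x) hwi
    simpa only [hθ] using this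
  simp only [hθ] at habel
  rw [← intervalIntegral.integral_of_le hxy] at habel
  have hI : ∫ t in x..y, deriv (fun t : ℝ => (t * Real.log t)⁻¹) t * Chebyshev.theta t =
      ∫ t in x..y, wderiv t * Chebyshev.theta t :=
    intervalIntegral.integral_congr fun t ht => by
      rw [Set.uIcc_of_le hxy] at ht
      simp only [hdE ht]
  have hθI : IntervalIntegrable (fun t => wderiv t * Chebyshev.theta t) volume x y :=
    (intervalIntegrable_iff_integrableOn_Icc_of_le hxy).2 hθi
  have htI : IntervalIntegrable (fun t => wderiv t * t) volume x y :=
    (hwc.mul continuousOn_id).intervalIntegrable_of_Icc hxy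
  have hprim : ∫ t in x..y, wderiv t * t = ((Real.log y)⁻¹ - Real.log (Real.log y)) -
      ((Real.log x)⁻¹ - Real.log (Real.log x)) :=
    intervalIntegral.integral_eq_sub_of_hasDerivAt (fun t ht => by
      rw [Set.uIcc_of_le hxy] at ht
      exact hasDerivAt_primitive (hmem t ht)) htI
  have hsplit : (fun t => wderiv t * (Chebyshev.theta t - t)) =
      fun t => wderiv t * Chebyshev.theta t - wderiv t * t := by ext t; ring
  rw [hsplit]
  refine ⟨hθI.sub htI, ?_⟩
  rw [intervalIntegral.integral_sub hθI htI, hprim]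
  have hS : (∑ p ∈ (Finset.range (⌊y⌋₊ + 1)).filter Nat.Prime, (1 : ℝ) / p) -
      (∑ p ∈ (Finset.range (⌊x⌋₊ + 1)).filter Nat.Prime, (1 : ℝ) / p) =
      ∑ k ∈ Finset.Ioc ⌊x⌋₊ ⌊y⌋₊, ((k : ℝ) * Real.log k)⁻¹ * c k := by
    rw [Finset.sum_filter, Finset.sum_filter,
      ← Finset.sum_Ico_eq_sub _ (Nat.succ_le_succ (Nat.floor_mono hxy))]
    have : Finset.Ico (⌊x⌋₊ + 1) (⌊y⌋₊ + 1) = Finset.Ioc ⌊x⌋₊ ⌊y⌋₊ := by ext; simp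
    rw [this]
    refine Finset.sum_congr rfl fun k _ => ?_
    simp only [hc]
    split_ifs with hk
    · have h1 : (1 : ℝ) < k := by exact_mod_cast hk.one_lt
      have h2 : Real.log k ≠ 0 := (Real.log_pos h1).ne'
      have h3 : (k : ℝ) ≠ 0 := by linarith
      field_simp
    · simp
  rw [hI] at habel
  have hy1 : 1 < y := hx.trans_le hxy
  have ex : (x * Real.log x)⁻¹ * x = (Real.log x)⁻¹ := by
    have : x ≠ 0 := by linarith
    rw [mul_inv]; field_simp
  have ey : (y * Real.log y)⁻¹ * y = (Real.log y)⁻¹ := by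
    have : y ≠ 0 := by linarith
    rw [mul_inv]; field_simp
  unfold mertensSum
  rw [mul_sub, mul_sub, ex, ey]
  linarith

/-- A Cauchy estimate for `mertensSum`, uniform in the upper end point. -/
lemma exists_mertensSum_sub_bound : ∃ C x₀ : ℝ, 0 < C ∧ Real.exp 2 ≤ x₀ ∧
    ∀ x y : ℝ, x₀ ≤ x → x ≤ y → |mertensSum y - mertensSum x| ≤ C / Real.log x ^ 3 := by
  obtain ⟨C, x₀, hC, hx₀, hθ⟩ := exists_theta_bound
  refine ⟨3 * C, x₀, by positivity, hx₀, fun x y hx hxy => ?_⟩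
  have hlog : ∀ t, x ≤ t → 1 < t ∧ 2 ≤ Real.log t := fun t ht => by
    have h2 : Real.exp 2 ≤ t := hx₀.trans (hx.trans ht)
    exact ⟨lt_of_lt_of_le (by simp) h2, (Real.le_log_iff_exp_le ((Real.exp_pos 2).trans_le h2)).2 h2⟩
  have hx1 := (hlog x le_rfl).1
  obtain ⟨hint, heq⟩ := mertensSum_sub hx1 hxy
  have hend : ∀ t, x ≤ t →
      |(t * Real.log t)⁻¹ * (Chebyshev.theta t - t)| ≤ C / 2 * (Real.log x)⁻¹ ^ 3 := by
    intro t ht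
    obtain ⟨h1, h2⟩ := hlog t ht
    have hmono : Real.log x ≤ Real.log t := Real.log_le_log (by linarith) ht
    have hlx := (hlog x le_rfl).2
    rw [abs_mul, abs_of_pos (by positivity)]
    calc (t * Real.log t)⁻¹ * |Chebyshev.theta t - t|
        ≤ (t * Real.log t)⁻¹ * (C * (t / Real.log t ^ 3)) :=
          mul_le_mul_of_nonneg_left (hθ t (hx.trans ht)) (by positivity)
      _ = C * (Real.log t)⁻¹ * (Real.log t)⁻¹ ^ 3 := by field_simp
      _ ≤ C * 2⁻¹ * (Real.log x)⁻¹ ^ 3 := by gcongr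
      _ = _ := by ring
  have hb : ‖∫ t in x..y, wderiv t * (Chebyshev.theta t - t)‖ ≤
      ∫ t in x..y, 3 * (C / 2) / (t * Real.log t ^ 4) := by
    refine intervalIntegral.norm_integral_le_of_norm_le hxy (Filter.Eventually.of_forall fun t ht => ?_) ?_
    · obtain ⟨h1, h2⟩ := hlog t ht.1.le
      have hw : |wderiv t| ≤ 3 / 2 / (t ^ 2 * Real.log t) := by
        unfold wderiv
        rw [abs_neg, abs_of_pos (by positivity), div_le_div_iff₀ (by positivity) (by positivity)]
        have : 0 ≤ t ^ 2 * Real.log t * (Real.log t / 2 - 1) :=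
          mul_nonneg (by positivity) (by linarith)
        nlinarith
      rw [norm_mul, Real.norm_eq_abs, Real.norm_eq_abs]
      calc |wderiv t| * |Chebyshev.theta t - t|
          ≤ 3 / 2 / (t ^ 2 * Real.log t) * (C * (t / Real.log t ^ 3)) :=
            mul_le_mul hw (hθ t (hx.trans ht.1.le)) (abs_nonneg _) (by positivity)
        _ = 3 * (C / 2) / (t * Real.log t ^ 4) := by field_simp
    · refine ContinuousOn.intervalIntegrable_of_Icc hxy ?_
      have hc : ContinuousOn Real.log (Set.Icc x y) :=
        Real.continuousOn_log.mono fun t ht => by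
          have := (hlog t ht.1).1
          simp; linarith
      refine continuousOn_const.div (continuousOn_id.mul (hc.pow 4)) fun t ht => ?_
      obtain ⟨h1, h2⟩ := hlog t ht.1
      positivity
  have hprim : ∫ t in x..y, 3 * (C / 2) / (t * Real.log t ^ 4) =
      -(C / 2 * (Real.log y)⁻¹ ^ 3) - -(C / 2 * (Real.log x)⁻¹ ^ 3) := by
    refine intervalIntegral.integral_eq_sub_of_hasDerivAt (f := fun t => -(C / 2 * (Real.log t)⁻¹ ^ 3))
      (fun t ht => ?_) ?_
    · rw [Set.uIcc_of_le hxy] at ht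
      exact hasDerivAt_inv_log_cube (hlog t ht.1).1 _
    · refine ContinuousOn.intervalIntegrable_of_Icc hxy ?_
      have hc : ContinuousOn Real.log (Set.Icc x y) :=
        Real.continuousOn_log.mono fun t ht => by
          have := (hlog t ht.1).1
          simp; linarith
      refine continuousOn_const.div (continuousOn_id.mul (hc.pow 4)) fun t ht => ?_
      obtain ⟨h1, h2⟩ := hlog t ht.1
      positivity
  have hy0 : 0 ≤ C / 2 * (Real.log y)⁻¹ ^ 3 := by
    have := (hlog y hxy).2
    positivity
  rw [hprim, Real.norm_eq_abs] at hb
  have e1 := hend x le_rfl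
  have e2 := hend y hxy
  have e : 3 * C / Real.log x ^ 3 = 3 * C * (Real.log x)⁻¹ ^ 3 := by
    rw [inv_pow, div_eq_mul_inv]
  rw [heq, e]
  have hx0 : 0 ≤ C * (Real.log x)⁻¹ ^ 3 := by
    have := (hlog x le_rfl).2
    positivity
  rw [abs_le] at *
  constructor <;> linarith [e1.1, e1.2, e2.1, e2.2, hb.1, hb.2]

end PartialSummation

/-- **(Dusart).** Unconditionally, the error term
`R(x) = ∑_{p ≤ x} 1/p − log log x − B₁` in Mertens' second theorem satisfies
`|R(x)| ≤ 1/(10 log² x) + 4/(15 log³ x)` for all sufficiently large `x`; here `B₁` is the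
Mertens constant, the limit of `∑_{p ≤ x} 1/p − log log x`. -/
theorem mertens_error_dusart_bound :
    ∀ B₁ : ℝ,
      Filter.Tendsto
        (fun x : ℝ =>
          (∑ p ∈ (Finset.range (⌊x⌋₊ + 1)).filter Nat.Prime, (1 : ℝ) / p) -
            Real.log (Real.log x))
        Filter.atTop (nhds B₁) →
      ∃ x₀ : ℝ, ∀ x : ℝ, x₀ ≤ x →
        |(∑ p ∈ (Finset.range (⌊x⌋₊ + 1)).filter Nat.Prime, (1 : ℝ) / p) -
            Real.log (Real.log x) - B₁| ≤
          1 / (10 * Real.log x ^ 2) + 4 / (15 * Real.log x ^ 3) := by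
  intro B₁ hB
  obtain ⟨C, x₀, hC, hx₀, h⟩ := exists_mertensSum_sub_bound
  refine ⟨max x₀ (Real.exp (10 * C)), fun x hx => ?_⟩
  have hxx : x₀ ≤ x := (le_max_left _ _).trans hx
  have hx0 : 0 < x := (Real.exp_pos 2).trans_le (hx₀.trans hxx)
  have hl2 : 10 * C ≤ Real.log x := (Real.le_log_iff_exp_le hx0).2 ((le_max_right _ _).trans hx)
  have hl : 0 < Real.log x := by linarith
  have hlim : |B₁ - mertensSum x| ≤ C / Real.log x ^ 3 := by
    refine le_of_tendsto ((hB.sub_const (mertensSum x)).abs) ?_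
    filter_upwards [Filter.eventually_ge_atTop x] with y hy using h x y hxx hy
  have h1 : C / Real.log x ^ 3 ≤ 1 / (10 * Real.log x ^ 2) := by
    rw [div_le_div_iff₀ (by positivity) (by positivity)]
    nlinarith [mul_le_mul_of_nonneg_right hl2 (by positivity : 0 ≤ Real.log x ^ 2)]
  have h2 : 0 ≤ 4 / (15 * Real.log x ^ 3) := by positivity
  rw [abs_sub_comm] at hlim
  exact hlim.trans (by linarith)
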